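/- Let the QMC rule Q_{d,n} use the point set P¹_{d,m} = ⋃_{p∈ℙ_m} S_{d,p} with min_{p∈ℙ_m} p ≥ d and n = ∑_{p∈ℙ_m} p². Then the worst-case error of Q_{d,n} on the unit ball of F_d² satisfies e^{wor}(F_d², Q_{d,n}) ≤ 16/(c_ℙ·m). -/

import Mathlib

open Finset

noncomputable section

/-- The support of a frequency vector. -/
def supp {d : ℕ} (k : Fin d → ℤ) : Finset (Fin d) :=
  Finset.univ.filter (fun j => k j ≠ 0)

/-- `width(supp k) = max supp(k) - min supp(k) + 1`, with value 1 for empty support. -/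
def width {d : ℕ} (k : Fin d → ℤ) : ℕ :=
  if h : (supp k).Nonempty then ((supp k).max' h).val - ((supp k).min' h).val + 1 else 1

/-- `min_{j ∈ supp(k)} log |k_j|`, with value 0 for empty support. -/
noncomputable def logmin {d : ℕ} (k : Fin d → ℤ) : ℝ :=
  if h : (supp k).Nonempty then (supp k).inf' h (fun j => Real.log |(k j : ℝ)|) else 0

/-- `exp(2πiz)`. -/
noncomputable def e2pi (z : ℂ) : ℂ := Complex.exp (2 * Real.pi * Complex.I * z)

/-- The set `ℙ_m` of primes `p` with `⌈m/2⌉ < p ≤ m`. -/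
def Pset (m : ℕ) : Finset ℕ :=
  (Finset.range (m + 1)).filter (fun p => p.Prime ∧ (m + 1) / 2 < p)

/-- The `h`-th point of Korobov's `p`-set `S_{d,p}`:
`x_h^{(p)} = ({h/p²}, {h²/p²}, …, {h^d/p²})`. -/
noncomputable def korobovPt (d p h : ℕ) : Fin d → ℝ :=
  fun j => Int.fract ((h : ℝ) ^ (j.val + 1) / (p : ℝ) ^ 2)

/-- The weight `max(width(supp k), min_{j ∈ supp k} log |k_j|)` defining the norm of `F_d²`. -/
noncomputable def weight2 {d : ℕ} (k : Fin d → ℤ) : ℝ := max (width k : ℝ) (logmin k)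

/-
Expanding `f` in its Fourier series, the error is `fhat 0` minus the average of the exponential
sums over the point set, so everything rests on the sum of `e(f_k(h) / p²)` over `h < p²`, where
`f_k = k₁ X + ⋯ + k_d X ^ d`. Splitting `h` by residues modulo `p` leaves only the residues at which
`f_k'` vanishes modulo `p`, each contributing at most `p`; if `f_k'` is not zero modulo `p`, there
are at most `width k` of them.

As `d ≤ p`, the polynomial `f_k'` vanishes modulo `p` only in two cases. Either `p` divides all
`k_j`: such primes are counted by `log |k_j|`. Or `p = d` and `p` divides all `k_j` but `k_d`: then
the sum is essentially `p` times a Heilbronn sum `∑ e(a u ^ p / p²) e(Q(u⁻¹) / p)`, `u ≠ 0`. Since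
this concerns a single prime, saving a factor `log m / width k` over the trivial bound is enough.

The fourth power of such a sum is bounded by an average of its autocorrelations along additive
quadruples `a + b = c + e` modulo `p`, on which the Heilbronn phase becomes a linear phase modulo
`p`. If `Q` is constant, the autocorrelation is small unless the linear phase vanishes; such
quadruples lie on level sets of the truncated logarithm `(1 - X ^ p - (1 - X) ^ p) / p`, which
Heath-Brown bounded by Stepanov's method. Otherwise the same device removes the linear phase, and
Mordell's elementary mean value bound for polynomial sums modulo `p` suffices.
-/

section Fibres

variable {α β : Type*} [Fintype α] [Fintype β]

theorem card_filter_prod_le {p : α × β → Prop} [DecidablePred p] {k : ℕ}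
    (h : ∀ b, #{a | p (a, b)} ≤ k) : #{z | p z} ≤ Fintype.card β * k := by
  rw [card_filter, Fintype.sum_prod_type_right, ← card_univ, ← smul_eq_mul]
  exact sum_le_card_nsmul _ _ _ fun b _ ↦ (card_filter _ _).symm.trans_le (h b)

theorem sum_comp_le_of_card_fibre_le [DecidableEq β] (g : α → β) {φ : β → ℝ} (hφ : ∀ b, 0 ≤ φ b)
    {k : ℕ} (h : ∀ a, #{a' | g a' = g a} ≤ k) : ∑ a, φ (g a) ≤ k * ∑ b, φ b := by
  rw [← sum_fiberwise univ g, mul_sum]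
  refine sum_le_sum fun b _ ↦ ?_
  rw [sum_congr rfl fun a ha ↦ by rw [(mem_filter.mp ha).2], sum_const, nsmul_eq_mul]
  refine mul_le_mul_of_nonneg_right ?_ (hφ b)
  rcases (filter (g · = b) univ).eq_empty_or_nonempty with hempty | ⟨a, ha⟩
  · simp [hempty]
  · rw [← (mem_filter.mp ha).2]
    exact mod_cast h a

end Fibres

section Orthogonality

theorem addChar_sum_eq_prod {A M ι : Type*} [AddCommMonoid A] [CommMonoid M] (χ : AddChar A M)
    (s : Finset ι) (f : ι → A) : χ (∑ i ∈ s, f i) = ∏ i ∈ s, χ (f i) :=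
  map_prod χ.toMonoidHom (fun i ↦ Multiplicative.ofAdd (f i)) s

theorem sum_mul_addChar_pow {α A : Type*} [Fintype α] [AddCommMonoid A] (χ : AddChar A ℂ)
    (F : α → ℂ) (v : α → A) (n : ℕ) :
    (∑ a, F a * χ (v a)) ^ n = ∑ x : Fin n → α, (∏ i, F (x i)) * χ (∑ i, v (x i)) := by
  simp only [Fintype.sum_pow, prod_mul_distrib, addChar_sum_eq_prod]

variable {α A : Type*} [Fintype α] [AddCommGroup A] [Fintype A] [DecidableEq A]

theorem sum_addChar_norm_sq_eq (g : α → A) (F : α → ℂ) :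
    ((∑ χ : AddChar A ℂ, ‖∑ a, F a * χ (g a)‖ ^ 2 : ℝ) : ℂ) =
      Fintype.card A *
        ∑ z : α × α with g z.1 = g z.2, F z.1 * (starRingEnd ℂ) (F z.2) := by
  have expand (χ : AddChar A ℂ) : ((‖∑ a, F a * χ (g a)‖ ^ 2 : ℝ) : ℂ) =
      ∑ z : α × α, F z.1 * (starRingEnd ℂ) (F z.2) * χ (g z.1 - g z.2) := by
    rw [Complex.ofReal_pow, ← Complex.mul_conj', map_sum, Fintype.sum_mul_sum,
      ← Fintype.sum_prod_type']
    refine sum_congr rfl fun z _ ↦ ?_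
    rw [map_mul, AddChar.map_sub_eq_div, ← AddChar.inv_apply_eq_conj, div_eq_mul_inv]
    ring
  rw [Complex.ofReal_sum, sum_congr rfl fun χ _ ↦ expand χ, sum_comm, mul_sum, sum_filter]
  refine sum_congr rfl fun z _ ↦ ?_
  rw [← mul_sum, AddChar.sum_apply_eq_ite]
  simp only [sub_eq_zero, mul_comm, ite_mul, zero_mul]

theorem sum_addChar_norm_sq_le (g : α → A) {F : α → ℂ} (hF : ∀ a, ‖F a‖ ≤ 1) :
    ∑ χ : AddChar A ℂ, ‖∑ a, F a * χ (g a)‖ ^ 2 ≤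
      Fintype.card A * (#{z : α × α | g z.1 = g z.2} : ℝ) := by
  rw [← Complex.norm_of_nonneg (sum_nonneg fun _ _ ↦ sq_nonneg _), sum_addChar_norm_sq_eq,
    norm_mul, Complex.norm_natCast]
  gcongr
  refine (norm_sum_le_of_le (n := fun _ ↦ 1) _ fun z _ ↦ ?_).trans (by simp)
  simpa using mul_le_one₀ (hF z.1) (norm_nonneg _) (hF z.2)

theorem sum_addChar_norm_pow_le (v : α → A) {F : α → ℂ} (hF : ∀ a, ‖F a‖ ≤ 1) (n : ℕ) :
    ∑ χ : AddChar A ℂ, ‖∑ a, F a * χ (v a)‖ ^ (2 * n) ≤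
      Fintype.card A *
        (#{z : (Fin n → α) × (Fin n → α) | ∑ i, v (z.1 i) = ∑ i, v (z.2 i)} : ℝ) := by
  simp_rw [mul_comm 2 n, pow_mul, ← norm_pow (∑ _, _) n, sum_mul_addChar_pow]
  refine sum_addChar_norm_sq_le (fun x : Fin n → α ↦ ∑ i, v (x i)) fun x ↦ ?_
  rw [norm_prod]
  exact prod_le_one (fun _ _ ↦ norm_nonneg _) fun i _ ↦ hF (x i)

end Orthogonality

section PowerSums

open scoped Nat

theorem card_map_univ_eq_le {α : Type*} [Fintype α] [DecidableEq α] {n : ℕ} (y : Fin n → α) :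
    #{x : Fin n → α | univ.val.map x = univ.val.map y} ≤ n ! := by
  have hlen : n ! = (List.ofFn y).permutations.length := by
    rw [List.length_permutations, List.length_ofFn]
  rw [hlen]
  refine (card_le_card_of_injOn List.ofFn (fun x hx ↦ ?_)
    List.ofFn_injective.injOn).trans (List.toFinset_card_le _)
  simpa [Fin.univ_val_map] using hx

variable {K : Type*} [Field K] {n : ℕ}

theorem natCast_ne_zero_of_factorial_ne_zero (hn : (n ! : K) ≠ 0) {j : ℕ} (hj : 1 ≤ j)
    (hjn : j ≤ n) : (j : K) ≠ 0 := by
  obtain ⟨c, hc⟩ := Nat.dvd_factorial hj hjn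
  rw [hc, Nat.cast_mul] at hn
  exact left_ne_zero_of_mul hn

theorem esymm_eq_of_sum_pow_eq (hn : (n ! : K) ≠ 0) {x y : Fin n → K}
    (h : ∀ j < n, ∑ i, x i ^ (j + 1) = ∑ i, y i ^ (j + 1)) {j : ℕ} (hj : j ≤ n) :
    (univ.val.map x).esymm j = (univ.val.map y).esymm j := by
  simp only [← MvPolynomial.aeval_esymm_eq_multiset_esymm (Fin n) K]
  induction j using Nat.strong_induction_on with
  | _ j ih =>
  rcases Nat.eq_zero_or_pos j with rfl | hpos
  · simp
  have newton (z : Fin n → K) := congrArg (MvPolynomial.aeval z)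
    (MvPolynomial.mul_esymm_eq_sum (Fin n) K j)
  simp only [map_mul, map_natCast, map_sum, map_pow, map_neg, map_one] at newton
  refine mul_left_cancel₀ (natCast_ne_zero_of_factorial_ne_zero hn hpos hj) ?_
  rw [newton, newton]
  congr 1
  refine sum_congr rfl fun a ha ↦ ?_
  obtain ⟨hadd, hlt⟩ := mem_filter.mp ha
  rw [HasAntidiagonal.mem_antidiagonal] at hadd
  rw [ih a.1 hlt (by omega)]
  congr 1
  obtain ⟨b, hb⟩ : ∃ b, a.2 = b + 1 := ⟨a.2 - 1, by omega⟩
  simpa [MvPolynomial.psum, hb] using h b (by omega)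

theorem map_univ_eq_of_sum_pow_eq (hn : (n ! : K) ≠ 0) {x y : Fin n → K}
    (h : ∀ j < n, ∑ i, x i ^ (j + 1) = ∑ i, y i ^ (j + 1)) :
    univ.val.map x = univ.val.map y := by
  rw [← Polynomial.roots_multiset_prod_X_sub_C (univ.val.map x),
    ← Polynomial.roots_multiset_prod_X_sub_C (univ.val.map y),
    Multiset.prod_X_sub_X_eq_sum_esymm, Multiset.prod_X_sub_X_eq_sum_esymm]
  simp only [Multiset.card_map, card_val, card_univ, Fintype.card_fin]
  congr 1
  refine sum_congr rfl fun j hj ↦ ?_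
  rw [esymm_eq_of_sum_pow_eq hn h (Nat.lt_succ_iff.mp (mem_range.mp hj))]

theorem sum_pow_eq_of_sum_eval_eq {g : ℕ → Polynomial K}
    (hg : ∀ j < n, (g j).natDegree = j + 1) {x y : Fin n → K}
    (h : ∀ j < n, ∑ i, (g j).eval (x i) = ∑ i, (g j).eval (y i)) {j : ℕ} (hj : j < n) :
    ∑ i, x i ^ (j + 1) = ∑ i, y i ^ (j + 1) := by
  induction j using Nat.strong_induction_on with
  | _ j ih =>
  have expand (z : Fin n → K) : ∑ i, (g j).eval (z i) =
      ∑ l ∈ range (j + 1), (g j).coeff l * ∑ i, z i ^ l +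
        (g j).leadingCoeff * ∑ i, z i ^ (j + 1) := by
    simp only [Polynomial.eval_eq_sum_range, hg j hj, sum_range_succ _ (j + 1), sum_add_distrib,
      mul_sum, Polynomial.leadingCoeff]
    rw [sum_comm]
  have lower : ∑ l ∈ range (j + 1), (g j).coeff l * ∑ i, x i ^ l =
      ∑ l ∈ range (j + 1), (g j).coeff l * ∑ i, y i ^ l := by
    refine sum_congr rfl fun l hl ↦ ?_
    rcases l with _ | l
    · simp
    · rw [ih l (by simpa using hl) (by have := mem_range.mp hl; omega)]
  have hlead : (g j).leadingCoeff ≠ 0 := by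
    rw [Polynomial.leadingCoeff_ne_zero]
    rintro h0
    simpa [h0] using hg j hj
  have := h j hj
  rw [expand, expand, lower] at this
  exact mul_left_cancel₀ hlead (add_left_cancel this)

theorem card_sum_eval_eq_le [Fintype K] [DecidableEq K] (hn : (n ! : K) ≠ 0) {g : ℕ → Polynomial K}
    (hg : ∀ j < n, (g j).natDegree = j + 1) (y : Fin n → K) :
    #{x : Fin n → K | ∀ j : Fin n, ∑ i, (g j).eval (x i) = ∑ i, (g j).eval (y i)} ≤ n ! := by
  refine (card_le_card fun x hx ↦ ?_).trans (card_map_univ_eq_le y)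
  rw [mem_filter_univ] at hx ⊢
  exact map_univ_eq_of_sum_pow_eq hn fun j hj ↦
    sum_pow_eq_of_sum_eval_eq hg (fun j hj ↦ hx ⟨j, hj⟩) hj

end PowerSums

section PolynomialSums

open Polynomial
open scoped Nat

variable {K : Type*} [Field K]

theorem natDegree_hasseDeriv_of_choose_ne_zero {f : K[X]} {m : ℕ}
    (hm : (f.natDegree.choose m : K) ≠ 0) :
    (hasseDeriv m f).natDegree = f.natDegree - m := by
  rcases eq_or_ne f 0 with rfl | hf
  · simp
  have hle : m ≤ f.natDegree := by
    by_contra! h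
    simp [Nat.choose_eq_zero_of_lt h] at hm
  refine natDegree_eq_of_le_of_coeff_ne_zero (natDegree_hasseDeriv_le f m) ?_
  rw [hasseDeriv_coeff, Nat.sub_add_cancel hle]
  exact mul_ne_zero hm (leadingCoeff_ne_zero.mpr hf)

/-- The character `v ↦ ψ (∑ i, D i * v i)` of `Kⁿ`. -/
def dotChar (ψ : AddChar K ℂ) {n : ℕ} (D : Fin n → K) : AddChar (Fin n → K) ℂ where
  toFun v := ψ (D ⬝ᵥ v)
  map_zero_eq_one' := by simp
  map_add_eq_mul' v w := by rw [dotProduct_add, AddChar.map_add_eq_mul]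

theorem dotChar_injective {ψ : AddChar K ℂ} (hψ : ψ ≠ 1) (n : ℕ) :
    Function.Injective (dotChar ψ (n := n)) := by
  intro D E hDE
  have hprim := AddChar.IsPrimitive.of_ne_one hψ
  ext i
  by_contra hne
  refine hprim (sub_ne_zero.mpr hne) ?_
  ext t
  have := DFunLike.congr_fun hDE (Pi.single i t)
  simp only [dotChar, AddChar.coe_mk, dotProduct_single] at this
  rw [AddChar.mulShift_apply, sub_mul, AddChar.map_sub_eq_div, this,
    div_self (ψ.val_isUnit _).ne_zero, AddChar.one_apply]

/-- The coefficients of `y ^ n, …, y` in the Taylor expansion of `∑ i, f (y + h i)`. -/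
def taylorVector (f : K[X]) {n : ℕ} (h : Fin n → K) : Fin n → K :=
  fun j ↦ ∑ i, (hasseDeriv (n - j) f).eval (h i)

theorem sum_eval_add_eq {f : K[X]} {n : ℕ} (hf : f.natDegree = n + 1) (h : Fin n → K) (y : K) :
    ∑ i, f.eval (y + h i) = ∑ i, f.eval (h i) +
      taylorVector f h ⬝ᵥ (fun j ↦ y ^ (n - (j : ℕ))) + n * f.leadingCoeff * y ^ (n + 1) := by
  have htaylor (i : Fin n) : f.eval (y + h i) = f.eval (h i) +
      ∑ j : Fin n, (hasseDeriv (n - j) f).eval (h i) * y ^ (n - (j : ℕ)) +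
        f.leadingCoeff * y ^ (n + 1) := by
    rw [← taylor_eval, eval_eq_sum_range, natDegree_taylor, hf, sum_range_succ, sum_range_succ',
      Fin.sum_univ_eq_sum_range fun j ↦ (hasseDeriv (n - j) f).eval (h i) * y ^ (n - j),
      ← sum_range_reflect fun j ↦ (taylor (h i) f).coeff (j + 1) * y ^ (j + 1)]
    rw [← hf, coeff_taylor_natDegree, hf, taylor_coeff_zero, pow_zero, mul_one,
      add_comm (∑ j ∈ _, _)]
    congr 2
    refine sum_congr rfl fun j hj ↦ ?_
    have := mem_range.mp hj
    rw [taylor_coeff, show n - 1 - j + 1 = n - j by omega]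
  simp only [htaylor, sum_add_distrib, taylorVector, dotProduct, sum_mul]
  rw [sum_comm]
  simp [mul_assoc]

variable [Fintype K]

theorem card_mul_norm_sum_addChar_poly_pow_le (ψ : AddChar K ℂ) {f : K[X]} {n : ℕ}
    (hf : f.natDegree = n + 1) :
    Fintype.card K * ‖∑ x, ψ (f.eval x)‖ ^ n ≤
      ∑ h : Fin n → K, ‖∑ y : K, ψ (n * f.leadingCoeff * y ^ (n + 1)) *
        dotChar ψ (taylorVector f h) fun j ↦ y ^ (n - (j : ℕ))‖ := by
  have hpow (y : K) : (∑ x, ψ (f.eval x)) ^ n =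
      ∑ h : Fin n → K, ψ (∑ i, f.eval (y + h i)) := by
    rw [← Equiv.sum_comp (Equiv.addLeft y), Fintype.sum_pow]
    simp only [addChar_sum_eq_prod, Equiv.coe_addLeft]
  have hsum : Fintype.card K * (∑ x, ψ (f.eval x)) ^ n =
      ∑ h : Fin n → K, ψ (∑ i, f.eval (h i)) * ∑ y : K, ψ (n * f.leadingCoeff * y ^ (n + 1)) *
        dotChar ψ (taylorVector f h) fun j ↦ y ^ (n - (j : ℕ)) := by
    rw [← nsmul_eq_mul, ← card_univ, ← sum_const, sum_congr rfl fun y _ ↦ hpow y, sum_comm]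
    refine sum_congr rfl fun h _ ↦ ?_
    rw [mul_sum]
    refine sum_congr rfl fun y _ ↦ ?_
    rw [sum_eval_add_eq hf, AddChar.map_add_eq_mul, AddChar.map_add_eq_mul]
    simp only [dotChar, AddChar.coe_mk]
    ring
  calc _ = ‖(Fintype.card K : ℂ) * (∑ x, ψ (f.eval x)) ^ n‖ := by simp
    _ ≤ _ := by
      rw [hsum]
      exact norm_sum_le_of_le _ fun h _ ↦ by rw [norm_mul, AddChar.norm_apply, one_mul]

theorem card_taylorVector_eq_le [DecidableEq K] {f : K[X]} {n : ℕ} (hf : f.natDegree = n + 1)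
    (hn : ((n + 1)! : K) ≠ 0) (h : Fin n → K) :
    #{h' : Fin n → K | taylorVector f h' = taylorVector f h} ≤ n ! := by
  have hfac : (n ! : K) ≠ 0 := by
    rw [Nat.factorial_succ, Nat.cast_mul] at hn
    exact right_ne_zero_of_mul hn
  have hdeg : ∀ j < n, (hasseDeriv (n - j) f).natDegree = j + 1 := fun j hj ↦ by
    rw [natDegree_hasseDeriv_of_choose_ne_zero, hf]
    · omega
    · rw [← Nat.choose_mul_factorial_mul_factorial (k := n - j) (by omega)] at hn
      rw [hf]
      push_cast at hn
      exact left_ne_zero_of_mul (left_ne_zero_of_mul hn)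
  refine (card_le_card fun h' hh' ↦ ?_).trans (card_sum_eval_eq_le hfac hdeg h)
  rw [mem_filter_univ] at hh' ⊢
  exact fun j ↦ congrFun hh' j

theorem card_sum_powers_eq_le [DecidableEq K] {n : ℕ} (hn : (n ! : K) ≠ 0) :
    #{z : (Fin n → K) × (Fin n → K) |
      ∑ i, (fun j : Fin n ↦ z.1 i ^ (n - (j : ℕ))) = ∑ i, fun j : Fin n ↦ z.2 i ^ (n - (j : ℕ))} ≤
      Fintype.card K ^ n * n ! := by
  rw [show Fintype.card K ^ n = Fintype.card (Fin n → K) by simp]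
  apply card_filter_prod_le
  intro y
  refine (card_le_card fun x hx ↦ ?_).trans
    (card_sum_eval_eq_le hn (g := fun j ↦ X ^ (j + 1)) (fun j _ ↦ natDegree_X_pow _) y)
  rw [mem_filter_univ] at hx ⊢
  intro j
  have := congrFun hx (Fin.rev j)
  simpa [Fin.val_rev, show n - (n - ((j : ℕ) + 1)) = j + 1 by omega] using this

theorem sum_dotChar_taylorVector_pow_le {ψ : AddChar K ℂ} (hψ : ψ ≠ 1) {f : K[X]} {n : ℕ}
    (hf : f.natDegree = n + 1) (hn : ((n + 1)! : K) ≠ 0) {F : K → ℂ} (hF : ∀ y, ‖F y‖ ≤ 1) :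
    ∑ h : Fin n → K,
      ‖∑ y, F y * dotChar ψ (taylorVector f h) fun j ↦ y ^ (n - (j : ℕ))‖ ^ (2 * n) ≤
      n ! * ((Fintype.card K : ℝ) ^ n * (Fintype.card K ^ n * n !)) := by
  classical
  have hfac : (n ! : K) ≠ 0 := by
    rw [Nat.factorial_succ, Nat.cast_mul] at hn
    exact right_ne_zero_of_mul hn
  let T (χ : AddChar (Fin n → K) ℂ) : ℝ := ‖∑ y, F y * χ fun j ↦ y ^ (n - (j : ℕ))‖
  have hT (χ) : 0 ≤ T χ := norm_nonneg _
  have moment : ∑ χ, T χ ^ (2 * n) ≤ (Fintype.card K : ℝ) ^ n * (Fintype.card K ^ n * n !) := by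
    refine (sum_addChar_norm_pow_le (fun y : K ↦ fun j : Fin n ↦ y ^ (n - (j : ℕ))) hF n).trans ?_
    rw [Fintype.card_fun, Fintype.card_fin, Nat.cast_pow]
    gcongr
    exact mod_cast card_sum_powers_eq_le hfac
  have fibres : ∑ h : Fin n → K, T (dotChar ψ (taylorVector f h)) ^ (2 * n) ≤
      n ! * ∑ χ, T χ ^ (2 * n) := by
    refine sum_comp_le_of_card_fibre_le (fun h : Fin n → K ↦ dotChar ψ (taylorVector f h))
      (fun χ ↦ pow_nonneg (hT χ) (2 * n)) fun h ↦ ?_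
    simpa only [(dotChar_injective hψ n).eq_iff] using card_taylorVector_eq_le hf hn h
  exact fibres.trans (by gcongr)

/-- The mean value method of Vinogradov: averaging over translations `y` expresses the `n`-th power
of the sum through the sums over `y ↦ (y ^ n, …, y)`, whose `2 * n`-th moment over all characters
counts solutions of a system of power sum equations. -/
theorem norm_sum_addChar_poly_pow_le {ψ : AddChar K ℂ} (hψ : ψ ≠ 1) {f : K[X]} {n : ℕ}
    (hf : f.natDegree = n + 1) (hn : ((n + 1)! : K) ≠ 0) :
    ‖∑ x, ψ (f.eval x)‖ ^ (2 * n * n) * Fintype.card K ^ n ≤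
      (n ! : ℝ) ^ 2 * Fintype.card K ^ (2 * n * n) := by
  obtain rfl | hpos := n.eq_zero_or_pos
  · simp
  set q : ℝ := (Fintype.card K : ℝ)
  set S := ‖∑ x, ψ (f.eval x)‖
  let T (h : Fin n → K) : ℝ := ‖∑ y : K, ψ (n * f.leadingCoeff * y ^ (n + 1)) *
    dotChar ψ (taylorVector f h) fun j ↦ y ^ (n - (j : ℕ))‖
  obtain ⟨k, hk⟩ : ∃ k, 2 * n = k + 1 := ⟨2 * n - 1, by omega⟩
  have hölder : (q * S ^ n) ^ (2 * n) ≤ (q ^ n) ^ k * (n ! * (q ^ n * (q ^ n * n !))) := by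
    calc (q * S ^ n) ^ (2 * n)
        ≤ (∑ h, T h) ^ (2 * n) := by
          gcongr
          exact card_mul_norm_sum_addChar_poly_pow_le ψ hf
      _ ≤ (q ^ n) ^ k * ∑ h, T h ^ (2 * n) := by
          simpa [hk, q] using pow_sum_le_card_mul_sum_pow (s := univ) (f := T)
            (fun _ _ ↦ norm_nonneg _) k
      _ ≤ _ := by
          gcongr
          exact sum_dotChar_taylorVector_pow_le hψ hf hn fun y ↦ (AddChar.norm_apply ψ _).le
  have hq : 0 < q := Nat.cast_pos.mpr Fintype.card_pos
  refine le_of_mul_le_mul_left ?_ (pow_pos hq n)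
  calc q ^ n * (S ^ (2 * n * n) * q ^ n) = (q * S ^ n) ^ (2 * n) := by ring
    _ ≤ _ := hölder
    _ = q ^ n * ((n ! : ℝ) ^ 2 * q ^ (2 * n * n)) := by rw [hk]; ring

end PolynomialSums

section Quadruples

/-- The autocorrelation of `F` along the ray through the quadruple `z`. -/
def quadrupleProduct {G : Type*} [Mul G] (F : G → ℂ) (z : (G × G) × (G × G)) (u : G) : ℂ :=
  F (u * z.1.1) * F (u * z.1.2) * (starRingEnd ℂ) (F (u * z.2.1) * F (u * z.2.2))

theorem norm_quadrupleProduct_le_one {G : Type*} [Mul G] {F : G → ℂ} (hF : ∀ u, ‖F u‖ ≤ 1)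
    (z : (G × G) × (G × G)) (u : G) : ‖quadrupleProduct F z u‖ ≤ 1 := by
  rw [quadrupleProduct, norm_mul, RCLike.norm_conj, norm_mul, norm_mul]
  refine mul_le_one₀ (mul_le_one₀ (hF _) (norm_nonneg _) (hF _)) (by positivity)
    (mul_le_one₀ (hF _) (norm_nonneg _) (hF _))

variable (K : Type*) [Field K] [Fintype K] [DecidableEq K]

/-- The quadruples of nonzero elements with `a + b = c + e`, encoded as `((a, b), (c, e))`. -/
def additiveQuadruples : Finset ((Kˣ × Kˣ) × (Kˣ × Kˣ)) :=
  {z | (z.1.1 + z.1.2 : K) = z.2.1 + z.2.2}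

variable {K}

theorem mem_additiveQuadruples {z : (Kˣ × Kˣ) × (Kˣ × Kˣ)} :
    z ∈ additiveQuadruples K ↔ (z.1.1 + z.1.2 : K) = z.2.1 + z.2.2 := by
  simp [additiveQuadruples]

theorem card_filter_additiveQuadruples_le {T : Finset K} {a c : Kˣ}
    {E : (Kˣ × Kˣ) × (Kˣ × Kˣ) → Prop} [DecidablePred E]
    (hT : ∀ b e : Kˣ, (a + b : K) = c + e → E ((a, b), (c, e)) → (e : K) ∈ T) :
    #{z ∈ additiveQuadruples K | E z ∧ (z.1.1, z.2.1) = (a, c)} ≤ #T := by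
  refine card_le_card_of_injOn (fun z ↦ (z.2.2 : K)) (fun z hz ↦ ?_) fun z hz z' hz' h ↦ ?_
  · obtain ⟨⟨a', b⟩, c', e⟩ := z
    simp only [coe_filter, mem_additiveQuadruples, Prod.mk.injEq, Set.mem_ofPred_eq] at hz
    obtain ⟨hadd, hE, rfl, rfl⟩ := hz
    exact hT b e hadd hE
  · obtain ⟨⟨a₁, b⟩, c₁, e⟩ := z
    obtain ⟨⟨a₂, b'⟩, c₂, e'⟩ := z'
    simp only [coe_filter, mem_additiveQuadruples, Prod.mk.injEq, Set.mem_ofPred_eq] at hz hz' h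
    obtain ⟨hadd, -, rfl, rfl⟩ := hz
    obtain ⟨hadd', -, rfl, rfl⟩ := hz'
    rw [h, ← hadd', add_right_inj] at hadd
    rw [Units.ext hadd, Units.ext h]

theorem card_exceptional_quadruples_le {B : ℕ} (E : (Kˣ × Kˣ) × (Kˣ × Kˣ) → Prop)
    [DecidablePred E]
    (hE : ∀ a c : Kˣ, a ≠ c → ∃ T : Finset K, #T ≤ B ∧
      ∀ b e : Kˣ, (a + b : K) = c + e → E ((a, b), (c, e)) → (e : K) ∈ T) :
    #{z ∈ additiveQuadruples K | E z} ≤ Fintype.card Kˣ ^ 2 * (B + 1) := by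
  have fibre (a c : Kˣ) : #{z ∈ additiveQuadruples K | E z ∧ (z.1.1, z.2.1) = (a, c)} ≤
      B + if a = c then Fintype.card Kˣ else 0 := by
    split_ifs with hac
    · refine (card_filter_additiveQuadruples_le (T := univ.image ((↑) : Kˣ → K))
        fun b e _ _ ↦ mem_image_of_mem _ (mem_univ e)).trans ?_
      exact card_image_le.trans (by rw [card_univ]; omega)
    · obtain ⟨T, hTB, hT⟩ := hE a c hac
      exact (card_filter_additiveQuadruples_le hT).trans hTB
  rw [card_eq_sum_card_fiberwise (f := fun z ↦ (z.1.1, z.2.1)) (t := univ) fun z _ ↦ mem_univ _]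
  simp only [filter_filter]
  refine (sum_le_sum fun x _ ↦ fibre x.1 x.2).trans (le_of_eq ?_)
  rw [sum_add_distrib, Fintype.sum_prod_type fun x : Kˣ × Kˣ ↦
    if x.1 = x.2 then Fintype.card Kˣ else 0]
  simp
  ring

theorem card_additiveQuadruples_le : #(additiveQuadruples K) ≤ Fintype.card Kˣ ^ 3 := by
  have hcard : Fintype.card Kˣ ^ 3 = #(univ : Finset (Kˣ × Kˣ × Kˣ)) := by
    simp only [card_univ, Fintype.card_prod]
    ring
  rw [hcard]
  refine card_le_card_of_injOn (fun z ↦ (z.1.1, z.2)) (fun _ _ ↦ mem_univ _) fun z hz z' hz' h ↦ ?_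
  obtain ⟨⟨a, b⟩, c, e⟩ := z
  obtain ⟨⟨a', b'⟩, c', e'⟩ := z'
  simp only [mem_coe, mem_additiveQuadruples, Prod.mk.injEq] at hz hz' h
  obtain ⟨rfl, rfl, rfl⟩ := h
  rw [← hz', add_right_inj] at hz
  rw [Units.ext hz]

theorem sum_quadruple_smul (Φ : (Kˣ × Kˣ) × (Kˣ × Kˣ) → ℂ) (u : Kˣ) :
    ∑ z ∈ additiveQuadruples K, Φ (u • z) = ∑ z ∈ additiveQuadruples K, Φ z := by
  refine sum_equiv (MulAction.toPerm u) (fun z ↦ ?_) fun z _ ↦ rfl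
  simp only [mem_additiveQuadruples, MulAction.toPerm_apply, Prod.smul_fst, Prod.smul_snd,
    smul_eq_mul, Units.val_mul, ← mul_add]
  exact (mul_right_injective₀ u.ne_zero).eq_iff.symm

theorem norm_sum_units_pow_four_le (F : Kˣ → ℂ) :
    Fintype.card Kˣ * ‖∑ u, F u‖ ^ 4 ≤
      Fintype.card K * ∑ z ∈ additiveQuadruples K, ‖∑ u, quadrupleProduct F z u‖ := by
  have energy := sum_addChar_norm_sq_eq (fun x : Kˣ × Kˣ ↦ (x.1 + x.2 : K)) fun x ↦ F x.1 * F x.2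
  have trivialChar : ‖∑ u, F u‖ ^ 4 ≤
      ∑ χ : AddChar K ℂ, ‖∑ x : Kˣ × Kˣ, F x.1 * F x.2 * χ (x.1 + x.2)‖ ^ 2 := by
    refine le_of_eq_of_le ?_ (single_le_sum (fun _ _ ↦ sq_nonneg _) (mem_univ 1))
    simp only [AddChar.one_apply, mul_one, Fintype.sum_prod_type, ← mul_sum, ← sum_mul, norm_mul]
    ring
  have average : (Fintype.card Kˣ : ℂ) * ∑ z ∈ additiveQuadruples K,
      F z.1.1 * F z.1.2 * (starRingEnd ℂ) (F z.2.1 * F z.2.2) =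
      ∑ z ∈ additiveQuadruples K, ∑ u, quadrupleProduct F z u := by
    rw [sum_comm, ← nsmul_eq_mul, ← card_univ, ← sum_const]
    exact sum_congr rfl fun u _ ↦ (sum_quadruple_smul
      (fun z ↦ F z.1.1 * F z.1.2 * (starRingEnd ℂ) (F z.2.1 * F z.2.2)) u).symm
  calc Fintype.card Kˣ * ‖∑ u, F u‖ ^ 4
      ≤ Fintype.card Kˣ * ∑ χ : AddChar K ℂ,
          ‖∑ x : Kˣ × Kˣ, F x.1 * F x.2 * χ (x.1 + x.2)‖ ^ 2 := by gcongr
    _ = ‖(Fintype.card Kˣ : ℂ) * (Fintype.card K * ∑ z ∈ additiveQuadruples K,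
          F z.1.1 * F z.1.2 * (starRingEnd ℂ) (F z.2.1 * F z.2.2))‖ := by
      rw [additiveQuadruples, ← energy, norm_mul, Complex.norm_natCast,
        Complex.norm_of_nonneg (by positivity)]
    _ = Fintype.card K * ‖∑ z ∈ additiveQuadruples K, ∑ u, quadrupleProduct F z u‖ := by
      rw [mul_left_comm, average, norm_mul, Complex.norm_natCast]
    _ ≤ _ := by gcongr; exact norm_sum_le _ _

theorem norm_sum_units_pow_four_le_of_exceptional {F : Kˣ → ℂ} (hF : ∀ u, ‖F u‖ ≤ 1) {B : ℕ}
    {k : ℝ} (hk : 0 ≤ k) (E : (Kˣ × Kˣ) × (Kˣ × Kˣ) → Prop)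
    (hE : ∀ a c : Kˣ, a ≠ c → ∃ T : Finset K, #T ≤ B ∧
      ∀ b e : Kˣ, (a + b : K) = c + e → E ((a, b), (c, e)) → (e : K) ∈ T)
    (hgeneric : ∀ z : (Kˣ × Kˣ) × (Kˣ × Kˣ), (z.1.1 + z.1.2 : K) = z.2.1 + z.2.2 → ¬E z →
      ‖∑ u, quadrupleProduct F z u‖ ≤ k) :
    ‖∑ u, F u‖ ^ 4 ≤ Fintype.card K ^ 3 * (B + 1 + k) := by
  classical
  set N := Fintype.card Kˣ
  have hN : (0 : ℝ) < N := Nat.cast_pos.mpr Fintype.card_pos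
  have hNq : (N : ℝ) ≤ Fintype.card K := mod_cast Fintype.card_le_of_injective _ Units.val_injective
  have exceptional : ∑ z ∈ additiveQuadruples K with E z, ‖∑ u, quadrupleProduct F z u‖ ≤
      N ^ 2 * (B + 1) * N := by
    refine (sum_le_card_nsmul _ _ (N : ℝ) fun z _ ↦ ?_).trans ?_
    · exact (norm_sum_le_of_le _ fun u _ ↦ norm_quadrupleProduct_le_one hF z u).trans (by simp [N])
    · rw [nsmul_eq_mul]
      gcongr
      exact mod_cast card_exceptional_quadruples_le E hE
  have generic : ∑ z ∈ additiveQuadruples K with ¬E z, ‖∑ u, quadrupleProduct F z u‖ ≤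
      N ^ 3 * k := by
    refine (sum_le_card_nsmul _ _ k fun z hz ↦ ?_).trans ?_
    · obtain ⟨hz, hzE⟩ := mem_filter.mp hz
      exact hgeneric z (mem_additiveQuadruples.mp hz) hzE
    · rw [nsmul_eq_mul]
      gcongr
      exact mod_cast (card_filter_le _ _).trans card_additiveQuadruples_le
  refine le_of_mul_le_mul_left ?_ hN
  calc N * ‖∑ u, F u‖ ^ 4
      ≤ Fintype.card K * (N ^ 2 * (B + 1) * N + N ^ 3 * k) := by
        refine (norm_sum_units_pow_four_le F).trans ?_
        rw [← sum_filter_add_sum_filter_not _ E]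
        gcongr
    _ = N * (Fintype.card K * N ^ 2 * (B + 1 + k)) := by ring
    _ ≤ N * (Fintype.card K * Fintype.card K ^ 2 * (B + 1 + k)) := by gcongr
    _ = N * (Fintype.card K ^ 3 * (B + 1 + k)) := by ring

end Quadruples

section InverseTwists

open Polynomial

variable {K : Type*} [Field K]

theorem exists_finset_of_inv_pow_add_eq {N : ℕ} (hN : N ≠ 0) {a c : Kˣ} (hac : a ≠ c) :
    ∃ T : Finset K, #T ≤ 2 * N ∧ ∀ b e : Kˣ, (a + b : K) = c + e →
      (↑a⁻¹ ^ N + ↑b⁻¹ ^ N : K) = ↑c⁻¹ ^ N + ↑e⁻¹ ^ N → (e : K) ∈ T := by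
  classical
  set d : K := a - c
  have hd : d ≠ 0 := sub_ne_zero.mpr (Units.val_injective.ne hac)
  let P : K[X] := X ^ N + C ((↑a⁻¹ : K) ^ N - ↑c⁻¹ ^ N) * ((X - C d) ^ N * X ^ N) - (X - C d) ^ N
  have hP : P ≠ 0 := by
    intro h
    have := congrArg (eval 0) h
    simp [P, hN, hd] at this
  have hdeg : P.natDegree ≤ 2 * N := by
    simp only [P]
    compute_degree
    omega
  refine ⟨P.roots.toFinset, (Multiset.toFinset_card_le _).trans ((card_roots' P).trans hdeg),
    fun b e hadd hinv ↦ ?_⟩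
  have hb : (e : K) - d = b := by simp only [d]; linear_combination -hadd
  rw [Multiset.mem_toFinset, mem_roots hP, IsRoot, eval_sub, eval_add]
  simp only [eval_mul, eval_pow, eval_sub, eval_X, eval_C, hb]
  have hbN : (b : K) ^ N * ↑b⁻¹ ^ N = 1 := by rw [← mul_pow, b.mul_inv, one_pow]
  have heN : (e : K) ^ N * ↑e⁻¹ ^ N = 1 := by rw [← mul_pow, e.mul_inv, one_pow]
  linear_combination (b : K) ^ N * e ^ N * hinv - (e : K) ^ N * hbN + (b : K) ^ N * heN

/-- `u ↦ R (u⁻¹)` is the phase of the autocorrelation along `z` of the function with phase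
`u ↦ Q (u⁻¹)`, where `R` is this polynomial. -/
def inverseTwistPoly (Q : K[X]) (z : (Kˣ × Kˣ) × (Kˣ × Kˣ)) : K[X] :=
  Q.comp (C (↑z.1.1⁻¹ : K) * X) + Q.comp (C (↑z.1.2⁻¹ : K) * X) -
    (Q.comp (C (↑z.2.1⁻¹ : K) * X) + Q.comp (C (↑z.2.2⁻¹ : K) * X))

theorem natDegree_inverseTwistPoly {Q : K[X]} {z : (Kˣ × Kˣ) × (Kˣ × Kˣ)}
    (hz : (↑z.1.1⁻¹ ^ Q.natDegree + ↑z.1.2⁻¹ ^ Q.natDegree : K) ≠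
      ↑z.2.1⁻¹ ^ Q.natDegree + ↑z.2.2⁻¹ ^ Q.natDegree) :
    (inverseTwistPoly Q z).natDegree = Q.natDegree := by
  have hle (a : K) : (Q.comp (C a * X)).natDegree ≤ Q.natDegree := by
    refine natDegree_comp_le.trans ?_
    exact (Nat.mul_le_mul_left _ (natDegree_C_mul_le a X)).trans (by simp)
  refine natDegree_eq_of_le_of_coeff_ne_zero ?_ ?_
  · exact (natDegree_sub_le_of_le (natDegree_add_le_of_degree_le (hle _) (hle _))
      (natDegree_add_le_of_degree_le (hle _) (hle _))).trans (max_self _).le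
  · rcases eq_or_ne Q 0 with rfl | hQ
    · simp at hz
    simp only [inverseTwistPoly, coeff_sub, coeff_add, comp_C_mul_X_coeff, ← mul_add, ← mul_sub]
    exact mul_ne_zero (leadingCoeff_ne_zero.mpr hQ) (sub_ne_zero.mpr hz)

theorem quadrupleProduct_mul_addChar [Finite K] (ψ : AddChar K ℂ) (φ : Kˣ → ℂ) (Q : K[X])
    (z : (Kˣ × Kˣ) × (Kˣ × Kˣ)) (u : Kˣ) :
    quadrupleProduct (fun u ↦ φ u * ψ (Q.eval (↑u⁻¹ : K))) z u =
      quadrupleProduct φ z u * ψ ((inverseTwistPoly Q z).eval (↑u⁻¹ : K)) := by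
  simp only [quadrupleProduct, inverseTwistPoly, eval_sub, eval_add, eval_comp, eval_mul, eval_C,
    eval_X, AddChar.map_sub_eq_div, AddChar.map_add_eq_mul, map_mul, Units.val_mul, mul_inv_rev,
    ← AddChar.inv_apply_eq_conj]
  field_simp

variable [Fintype K] [DecidableEq K]

theorem norm_sum_inverse_twist_pow_four_le (ψ : AddChar K ℂ) {φ : Kˣ → ℂ} (hφ : ∀ u, ‖φ u‖ ≤ 1)
    {Q : K[X]} (hQ : Q.natDegree ≠ 0) {k : ℝ} (hk : 0 ≤ k)
    (hφk : ∀ z : (Kˣ × Kˣ) × (Kˣ × Kˣ), (z.1.1 + z.1.2 : K) = z.2.1 + z.2.2 →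
      ∀ R : K[X], R.natDegree = Q.natDegree →
        ‖∑ u, quadrupleProduct φ z u * ψ (R.eval (↑u⁻¹ : K))‖ ≤ k) :
    ‖∑ u, φ u * ψ (Q.eval (↑u⁻¹ : K))‖ ^ 4 ≤
      Fintype.card K ^ 3 * (2 * Q.natDegree + 1 + k) := by
  have := norm_sum_units_pow_four_le_of_exceptional (B := 2 * Q.natDegree)
    (F := fun u ↦ φ u * ψ (Q.eval (↑u⁻¹ : K))) (fun u ↦ ?_) hk
    (fun z ↦ (↑z.1.1⁻¹ ^ Q.natDegree + ↑z.1.2⁻¹ ^ Q.natDegree : K) =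
      ↑z.2.1⁻¹ ^ Q.natDegree + ↑z.2.2⁻¹ ^ Q.natDegree)
    (fun a c hac ↦ exists_finset_of_inv_pow_add_eq hQ hac) fun z hz hzE ↦ ?_
  · exact_mod_cast this
  · rw [norm_mul, AddChar.norm_apply, mul_one]
    exact hφ u
  · simp only [quadrupleProduct_mul_addChar]
    exact hφk z hz _ (natDegree_inverseTwistPoly hzE)

theorem sum_eq_sum_units_add (F : K → ℂ) : ∑ x, F x = ∑ u : Kˣ, F u + F 0 := by
  rw [← sum_erase_add univ F (mem_univ 0)]
  congr 1
  exact sum_bij' (fun x hx ↦ Units.mk0 x (ne_of_mem_erase hx)) (fun u _ ↦ (u : K))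
    (fun _ _ ↦ mem_univ _) (fun u _ ↦ mem_erase.mpr ⟨u.ne_zero, mem_univ _⟩) (fun _ _ ↦ rfl)
    (fun u _ ↦ Units.mk0_val u u.ne_zero) fun _ _ ↦ rfl

theorem norm_sum_units_inv_le (ψ : AddChar K ℂ) (R : K[X]) :
    ‖∑ u : Kˣ, ψ (R.eval (↑u⁻¹ : K))‖ ≤ ‖∑ x, ψ (R.eval x)‖ + 1 := by
  have hunits : ∑ x, ψ (R.eval x) = ∑ u : Kˣ, ψ (R.eval (↑u⁻¹ : K)) + ψ (R.eval 0) := by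
    rw [sum_eq_sum_units_add, ← Equiv.sum_comp (Equiv.inv Kˣ)]
    rfl
  rw [hunits]
  have := norm_sub_le (∑ u : Kˣ, ψ (R.eval (↑u⁻¹ : K)) + ψ (R.eval 0)) (ψ (R.eval 0))
  rwa [add_sub_cancel_right, AddChar.norm_apply] at this

theorem norm_sum_linear_add_inv_pow_four_le (ψ : AddChar K ℂ) (A : K) {Q : K[X]}
    (hQ : Q.natDegree ≠ 0) {k : ℝ}
    (hk : ∀ R : K[X], R.natDegree = Q.natDegree → ‖∑ x, ψ (R.eval x)‖ ≤ k) :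
    ‖∑ u : Kˣ, ψ (A * u + Q.eval (↑u⁻¹ : K))‖ ^ 4 ≤
      Fintype.card K ^ 3 * (2 * Q.natDegree + 2 + k) := by
  have hk0 : 0 ≤ k := (norm_nonneg _).trans (hk Q rfl)
  have := norm_sum_inverse_twist_pow_four_le ψ (φ := fun u : Kˣ ↦ ψ (A * u))
    (fun u ↦ (AddChar.norm_apply ψ _).le) hQ (k := k + 1) (by positivity) fun z hz R hR ↦ ?_
  · simp only [← AddChar.map_add_eq_mul] at this
    refine this.trans_eq ?_
    ring
  · have hone (u : Kˣ) : quadrupleProduct (fun u : Kˣ ↦ ψ (A * u)) z u = 1 := by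
      simp only [quadrupleProduct, Units.val_mul, ← AddChar.map_add_eq_mul,
        ← AddChar.inv_apply_eq_conj, ← mul_add, hz]
      exact mul_inv_cancel₀ (ψ.val_isUnit _).ne_zero
    simp only [hone, one_mul]
    exact (norm_sum_units_inv_le ψ R).trans (by gcongr; exact hk R hR)

end InverseTwists

section FermatQuotient

open Polynomial

variable (p : ℕ) [hp : Fact p.Prime]

theorem exists_one_sub_X_pow_sub_eq :
    ∃ l : ℤ[X], 1 - X ^ p - (1 - X) ^ p = C (p : ℤ) * l := by
  obtain ⟨r, hr⟩ := exists_add_pow_prime_eq hp.out (X : ℤ[X]) (1 - X)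
  refine ⟨X * (1 - X) * r, ?_⟩
  rw [add_sub_cancel, one_pow] at hr
  simp only [map_natCast]
  linear_combination hr

/-- The polynomial `(1 - X ^ p - (1 - X) ^ p) / p`, a truncated logarithm modulo `p`. -/
def fermatQuotientPoly : ℤ[X] := (exists_one_sub_X_pow_sub_eq p).choose

theorem one_sub_X_pow_sub_eq :
    1 - X ^ p - (1 - X) ^ p = C (p : ℤ) * fermatQuotientPoly p :=
  (exists_one_sub_X_pow_sub_eq p).choose_spec

/-- The reduction modulo `p` of `fermatQuotientPoly p`. -/
def truncatedLog : (ZMod p)[X] := (fermatQuotientPoly p).map (Int.castRingHom (ZMod p))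

theorem natDegree_truncatedLog_le : (truncatedLog p).natDegree ≤ p := by
  have hp0 : (p : ℤ) ≠ 0 := mod_cast hp.out.ne_zero
  refine natDegree_map_le.trans ?_
  rw [← natDegree_C_mul hp0, ← one_sub_X_pow_sub_eq]
  compute_degree

theorem one_sub_X_mul_derivative_truncatedLog :
    (1 - X) * derivative (truncatedLog p) = 1 - X ^ (p - 1) := by
  have hp0 : C (p : ℤ) ≠ 0 := C_ne_zero.mpr (mod_cast hp.out.ne_zero)
  have hderiv : derivative (fermatQuotientPoly p) = (1 - X) ^ (p - 1) - X ^ (p - 1) := by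
    refine mul_left_cancel₀ hp0 ?_
    rw [← derivative_C_mul, ← one_sub_X_pow_sub_eq]
    simp [derivative_pow]
    ring
  have hsucc : p - 1 + 1 = p := Nat.sub_add_cancel hp.out.one_le
  rw [truncatedLog, derivative_map, hderiv]
  simp only [Polynomial.map_sub, Polynomial.map_pow, Polynomial.map_one, map_X]
  rw [mul_sub, ← pow_succ', hsucc, sub_pow_char, one_pow]
  have hX : (X : (ZMod p)[X]) ^ p = X ^ (p - 1) * X := by rw [← pow_succ, hsucc]
  linear_combination -hX

variable {p}

theorem one_sub_X_mul_derivative_pow (R : Type*) [CommRing R] (i : ℕ) :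
    (1 - X) * derivative ((1 - X : R[X]) ^ i) = -C (i : R) * (1 - X) ^ i := by
  rcases i with _ | i
  · simp
  · simp [derivative_pow]
    ring

theorem derivative_one_sub_X_pow_mul_comp (i : ℕ) (g : (ZMod p)[X]) :
    (1 - X) * derivative ((1 - X) ^ i * g.comp (truncatedLog p)) =
      (1 - X) ^ i * (derivative g - C (i : ZMod p) * g).comp (truncatedLog p) -
        X ^ (p - 1) * ((1 - X) ^ i * (derivative g).comp (truncatedLog p)) := by
  rw [derivative_mul, derivative_comp, sub_comp, mul_comp, C_comp]
  linear_combination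
    g.comp (truncatedLog p) * one_sub_X_mul_derivative_pow (ZMod p) i + (1 - X) ^ i *
    (derivative g).comp (truncatedLog p) * one_sub_X_mul_derivative_truncatedLog p

theorem natDegree_eq_zero_of_derivative_eq_zero_of_lt {g : (ZMod p)[X]} (hg : g.natDegree < p)
    (hder : derivative g = 0) : g.natDegree = 0 := by
  by_contra hne
  obtain ⟨n, hn⟩ := Nat.exists_eq_succ_of_ne_zero hne
  have hcoeff := congrArg (coeff · n) hder
  simp only [coeff_derivative, coeff_zero] at hcoeff
  have hcast : ((n + 1 : ℕ) : ZMod p) ≠ 0 := by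
    rw [Ne, ZMod.natCast_eq_zero_iff]
    exact Nat.not_dvd_of_pos_of_lt n.succ_pos (by omega)
  refine mul_ne_zero ?_ (mod_cast hcast) hcoeff
  rw [← Nat.succ_eq_add_one, ← hn]
  refine leadingCoeff_ne_zero.mpr ?_
  rintro rfl
  simp at hne

theorem natDegree_derivative_add_C_mul_le (g : (ZMod p)[X]) (a : ZMod p) :
    (derivative g + C a * g).natDegree ≤ g.natDegree :=
  natDegree_add_le_of_degree_le ((natDegree_derivative_le g).trans (Nat.sub_le _ _))
    (natDegree_C_mul_le a g)

theorem derivative_add_C_mul_ne_zero {g : (ZMod p)[X]} (hg : g ≠ 0) {a : ZMod p} (ha : a ≠ 0) :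
    derivative g + C a * g ≠ 0 := fun h ↦ by
  have hlt := degree_derivative_lt hg
  rw [eq_neg_of_add_eq_zero_left h, degree_neg, degree_C_mul ha] at hlt
  exact hlt.false

section Annihilator

variable {A : ℕ} (i₀ : Fin A) (s : Finset (Fin A)) (g : Fin A → (ZMod p)[X])

theorem X_pow_dvd_sum_derivative_add_C_mul {W : ℕ} (hW : W < p)
    (hdvd : X ^ (W + 1) ∣ ∑ i ∈ s, (1 - X) ^ (i : ℕ) * (g i).comp (truncatedLog p)) :
    X ^ W ∣ ∑ i ∈ s, (1 - X) ^ (i : ℕ) *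
      (derivative (g i) + C ((i₀ : ℕ) - (i : ℕ) : ZMod p) * g i).comp (truncatedLog p) := by
  have hsum : ∑ i ∈ s, (1 - X) ^ (i : ℕ) *
      (derivative (g i) + C ((i₀ : ℕ) - (i : ℕ) : ZMod p) * g i).comp (truncatedLog p) =
      (1 - X) * derivative (∑ i ∈ s, (1 - X) ^ (i : ℕ) * (g i).comp (truncatedLog p)) +
      C ((i₀ : ℕ) : ZMod p) * ∑ i ∈ s, (1 - X) ^ (i : ℕ) * (g i).comp (truncatedLog p) +
      X ^ (p - 1) * ∑ i ∈ s, (1 - X) ^ (i : ℕ) * (derivative (g i)).comp (truncatedLog p) := by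
    simp only [derivative_sum, mul_sum, ← sum_add_distrib]
    refine sum_congr rfl fun i _ ↦ ?_
    rw [derivative_one_sub_X_pow_mul_comp]
    simp only [add_comp, sub_comp, mul_comp, C_comp, C_sub]
    ring
  have hdvd_derivative := pow_sub_one_dvd_derivative_of_pow_dvd hdvd
  rw [Nat.add_sub_cancel] at hdvd_derivative
  rw [hsum]
  refine dvd_add (dvd_add (Dvd.dvd.mul_left ?_ _) (Dvd.dvd.mul_left ?_ _)) ?_
  · exact hdvd_derivative
  · exact (pow_dvd_pow X W.le_succ).trans hdvd
  · exact (pow_dvd_pow X (by omega)).mul_right _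

variable {i₀ s g}

theorem sum_natDegree_derivative_add_C_mul_lt (hi₀ : i₀ ∈ s) :
    ∑ i ∈ s with derivative (g i) + C ((i₀ : ℕ) - (i : ℕ) : ZMod p) * g i ≠ 0,
      ((derivative (g i) + C ((i₀ : ℕ) - (i : ℕ) : ZMod p) * g i).natDegree + 1) <
      ∑ i ∈ s, ((g i).natDegree + 1) := by
  rw [sum_filter]
  refine sum_lt_sum (fun i _ ↦ ?_) ⟨i₀, hi₀, ?_⟩
  · split_ifs
    · exact Nat.succ_le_succ (natDegree_derivative_add_C_mul_le _ _)
    · exact Nat.zero_le _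
  · simp only [sub_self, C_0, zero_mul, add_zero]
    split_ifs with h
    · refine Nat.succ_lt_succ (natDegree_derivative_lt fun h0 ↦ h ?_)
      rw [eq_C_of_natDegree_eq_zero h0, derivative_C]
    · exact Nat.succ_pos _

theorem exists_derivative_add_C_mul_ne_zero (hi₀ : i₀ ∈ s) (hA : A ≤ p)
    (hg : ∀ i ∈ s, g i ≠ 0) (hdeg : ∀ i ∈ s, (g i).natDegree < p)
    (hdvd : X ∣ ∑ i ∈ s, (1 - X) ^ (i : ℕ) * (g i).comp (truncatedLog p)) :
    ∃ i ∈ s, derivative (g i) + C ((i₀ : ℕ) - (i : ℕ) : ZMod p) * g i ≠ 0 := by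
  by_contra! hzero
  have hsingle : s = {i₀} := eq_singleton_iff_unique_mem.mpr ⟨hi₀, fun i hi ↦ ?_⟩
  · have hconst : (g i₀).natDegree = 0 :=
      natDegree_eq_zero_of_derivative_eq_zero_of_lt (hdeg i₀ hi₀) (by simpa using hzero i₀ hi₀)
    rw [hsingle, sum_singleton, X_dvd_iff, coeff_zero_eq_eval_zero,
      eq_C_of_natDegree_eq_zero hconst] at hdvd
    refine hg i₀ hi₀ ?_
    rw [eq_C_of_natDegree_eq_zero hconst]
    simpa using hdvd
  · by_contra hne
    refine derivative_add_C_mul_ne_zero (hg i hi) (sub_ne_zero.mpr fun heq ↦ hne ?_) (hzero i hi)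
    rw [ZMod.natCast_eq_natCast_iff'] at heq
    rwa [Nat.mod_eq_of_lt (i₀.2.trans_le hA), Nat.mod_eq_of_lt (i.2.trans_le hA), eq_comm,
      ← Fin.ext_iff] at heq

end Annihilator

/-- Applying `(1 - X) d/dX + i₀` lowers the degree of the coefficient `g i₀` and increases no
other degree, while the order of vanishing at `0` drops by at most one. -/
theorem not_X_pow_dvd_sum_comp_truncatedLog {A W : ℕ} (hA : A ≤ p) (hW : W ≤ p)
    {s : Finset (Fin A)} (hs : s.Nonempty) {g : Fin A → (ZMod p)[X]} (hg : ∀ i ∈ s, g i ≠ 0)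
    (hdeg : ∑ i ∈ s, ((g i).natDegree + 1) ≤ W) :
    ¬ X ^ W ∣ ∑ i ∈ s, (1 - X) ^ (i : ℕ) * (g i).comp (truncatedLog p) := by
  have hle : ∀ i ∈ s, (g i).natDegree + 1 ≤ W := fun i hi ↦
    (single_le_sum (f := fun i ↦ (g i).natDegree + 1) (fun _ _ ↦ Nat.zero_le _) hi).trans hdeg
  obtain ⟨i₀, hi₀⟩ := hs
  induction W generalizing s g i₀ with
  | zero => exact absurd (hle i₀ hi₀) (by omega)
  | succ W ih =>
    intro hdvd
    let h (i : Fin A) : (ZMod p)[X] := derivative (g i) + C ((i₀ : ℕ) - (i : ℕ) : ZMod p) * g i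
    have hdvd_h : X ^ W ∣
        ∑ i ∈ s with h i ≠ 0, (1 - X) ^ (i : ℕ) * (h i).comp (truncatedLog p) := by
      rw [sum_filter_of_ne (p := (h · ≠ 0))
        fun i _ hne h0 ↦ hne (by rw [h0, zero_comp, mul_zero])]
      exact X_pow_dvd_sum_derivative_add_C_mul i₀ s g (by omega) hdvd
    obtain ⟨i₁, hi₁, hne⟩ := exists_derivative_add_C_mul_ne_zero hi₀ hA hg
      (fun i hi ↦ by have := hle i hi; omega) ((dvd_pow_self X W.succ_ne_zero).trans hdvd)
    refine ih (by omega) (fun i hi ↦ (mem_filter.mp hi).2)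
      (Nat.lt_succ_iff.mp ((sum_natDegree_derivative_add_C_mul_lt hi₀).trans_le hdeg))
      (fun i hi ↦ ?_) i₁ (mem_filter.mpr ⟨hi₁, hne⟩) hdvd_h
    exact (single_le_sum (f := fun i ↦ (h i).natDegree + 1) (fun _ _ ↦ Nat.zero_le _) hi).trans
      (Nat.lt_succ_iff.mp ((sum_natDegree_derivative_add_C_mul_lt hi₀).trans_le hdeg))

end FermatQuotient

section Stepanov

open Polynomial

theorem exists_ne_zero_forall_apply_eq_zero {K V W ι : Type*} [Field K] [AddCommGroup V]
    [Module K V] [FiniteDimensional K V] [AddCommGroup W] [Module K W] [Fintype ι]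
    (φ : ι → V →ₗ[K] W)
    (hφ : ∑ i, Module.finrank K (LinearMap.range (φ i)) < Module.finrank K V) :
    ∃ v ≠ 0, ∀ i, φ i v = 0 := by
  have hker : LinearMap.ker (LinearMap.pi fun i ↦ (φ i).rangeRestrict) ≠ ⊥ :=
    LinearMap.ker_ne_bot_of_finrank_lt (by rwa [Module.finrank_pi_fintype])
  obtain ⟨v, hv, hv0⟩ := Submodule.exists_mem_ne_zero_of_ne_bot hker
  exact ⟨v, hv0, fun i ↦ congrArg Subtype.val (congrFun (LinearMap.mem_ker.mp hv) i)⟩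

theorem finrank_range_le_of_forall_mem_map_degreeLT {K V W : Type*} [Field K] [AddCommGroup V]
    [Module K V] [AddCommGroup W] [Module K W] {φ : V →ₗ[K] W} {θ : K[X] →ₗ[K] W} {n : ℕ}
    (h : ∀ v, φ v ∈ (degreeLT K n).map θ) : Module.finrank K (LinearMap.range φ) ≤ n :=
  calc Module.finrank K (LinearMap.range φ)
      ≤ Module.finrank K ((degreeLT K n).map θ) :=
        Submodule.finrank_mono (LinearMap.range_le_iff_comap.mpr
          (Submodule.eq_top_iff'.mpr h))
    _ ≤ Module.finrank K (degreeLT K n) := Submodule.finrank_map_le _ _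
    _ = n := by rw [(degreeLTEquiv K n).finrank_eq, Module.finrank_fin_fun]

theorem card_mul_le_natDegree {R : Type*} [CommRing R] [IsDomain R] {f : R[X]} {S : Finset R}
    {M : ℕ} (hS : ∀ x ∈ S, M ≤ f.rootMultiplicity x) :
    M * #S ≤ f.natDegree := by
  classical
  have hle : M • S.val ≤ f.roots := Multiset.le_iff_count.mpr fun x ↦ by
    rw [Multiset.count_nsmul, count_roots]
    by_cases hx : x ∈ S
    · rw [Multiset.count_eq_one_of_mem S.nodup hx, mul_one]
      exact hS x hx
    · rw [Multiset.count_eq_zero_of_notMem hx, mul_zero]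
      exact Nat.zero_le _
  calc M * #S = Multiset.card (M • S.val) := (Multiset.card_nsmul _ _).symm
    _ ≤ Multiset.card f.roots := Multiset.card_le_card hle
    _ ≤ f.natDegree := card_roots' f

/-- The derivation `X (1 - X) d/dX`, under which powers of `1 - X` and of the truncated logarithm
stay in the span of such powers. -/
def stepanovDerivation (R : Type*) [CommRing R] : R[X] →ₗ[R] R[X] :=
  LinearMap.mulLeft R (X * (1 - X)) ∘ₗ derivative

theorem stepanovDerivation_apply {R : Type*} [CommRing R] (f : R[X]) :
    stepanovDerivation R f = X * (1 - X) * derivative f := rfl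

variable {p : ℕ} [hp : Fact p.Prime]

theorem X_sub_C_pow_dvd_of_dvd_derivative {M : ℕ} (hM : M < p) {x : ZMod p} {f : (ZMod p)[X]}
    (hroot : f.IsRoot x) (hderiv : (X - C x) ^ M ∣ derivative f) : (X - C x) ^ (M + 1) ∣ f := by
  rcases eq_or_ne f 0 with rfl | hf
  · exact dvd_zero _
  rw [← le_rootMultiplicity_iff hf]
  by_contra! hlt
  obtain ⟨q, hq, hndvd⟩ := exists_eq_pow_rootMultiplicity_mul_and_not_dvd f hf x
  obtain ⟨n, hn⟩ := Nat.exists_eq_succ_of_ne_zero ((rootMultiplicity_pos hf).mpr hroot).ne'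
  rw [hn] at hq hlt
  have hcast : ((n + 1 : ℕ) : ZMod p) ≠ 0 := by
    rw [Ne, ZMod.natCast_eq_zero_iff]
    exact Nat.not_dvd_of_pos_of_lt n.succ_pos (by omega)
  have hdvd : (X - C x) ^ n * (X - C x) ∣ (X - C x) ^ n * (C ((n + 1 : ℕ) : ZMod p) * q) := by
    rw [← pow_succ]
    have hderiv_eq : (X - C x) ^ n * (C ((n + 1 : ℕ) : ZMod p) * q) =
        derivative f - (X - C x) ^ (n + 1) * derivative q := by
      conv_rhs => rw [hq]
      simp only [Nat.succ_eq_add_one, derivative_mul, derivative_X_sub_C_pow,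
        Nat.add_sub_cancel]
      ring
    rw [hderiv_eq]
    exact dvd_sub ((pow_dvd_pow _ (by omega)).trans hderiv) (dvd_mul_right _ _)
  have hdvd_q := (mul_dvd_mul_iff_left (pow_ne_zero n (X_sub_C_ne_zero x))).mp hdvd
  exact hndvd (((isUnit_C.mpr hcast.isUnit).dvd_mul_left).mp hdvd_q)

theorem X_sub_C_pow_dvd_of_iterate_stepanovDerivation {M : ℕ} (hM : M ≤ p)
    {x : ZMod p} (hx₀ : x ≠ 0) (hx₁ : x ≠ 1) {f : (ZMod p)[X]}
    (hzero : ∀ j < M, ((stepanovDerivation (ZMod p))^[j] f).eval x = 0) :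
    (X - C x) ^ M ∣ f := by
  induction M generalizing f with
  | zero => exact one_dvd _
  | succ M ih =>
    refine X_sub_C_pow_dvd_of_dvd_derivative hM (hzero 0 M.succ_pos) ?_
    have hdvd : (X - C x) ^ M ∣ X * (1 - X) * derivative f :=
      ih (by omega) fun j hj ↦ hzero (j + 1) (by omega)
    have hprime := prime_X_sub_C x
    refine (hprime.pow_dvd_of_dvd_mul_left M (fun h ↦ ?_) hdvd)
    rw [dvd_iff_isRoot, IsRoot.def] at h
    simp [hx₀, sub_eq_zero, hx₁.symm] at h

/-- The space on which the Stepanov argument runs: combinations of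
`(1 - X) ^ i * (truncatedLog p) ^ j * X ^ (p * k)` with `i + k ≤ t` and `j` arbitrary. -/
def stepanovSpace (p : ℕ) [Fact p.Prime] (t : ℕ) : Submodule (ZMod p) (ZMod p)[X] :=
  Submodule.span (ZMod p)
    {f | ∃ i j k, i + k ≤ t ∧ f = (1 - X) ^ i * truncatedLog p ^ j * X ^ (p * k)}

theorem stepanovDerivation_monomial (i j k : ℕ) :
    stepanovDerivation (ZMod p) ((1 - X) ^ i * truncatedLog p ^ j * X ^ (p * k)) =
      (i : ZMod p) • ((1 - X) ^ (i + 1) * truncatedLog p ^ j * X ^ (p * k)) -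
      (i : ZMod p) • ((1 - X) ^ i * truncatedLog p ^ j * X ^ (p * k)) +
      (j : ZMod p) • ((1 - X) ^ i * truncatedLog p ^ (j - 1) * X ^ (p * k) -
        (1 - X) ^ (i + 1) * truncatedLog p ^ (j - 1) * X ^ (p * k) -
        (1 - X) ^ i * truncatedLog p ^ (j - 1) * X ^ (p * (k + 1))) := by
  have hfrob : derivative ((X : (ZMod p)[X]) ^ (p * k)) = 0 := by simp [derivative_X_pow]
  have hX : (X : (ZMod p)[X]) ^ p = X ^ (p - 1) * X := by
    rw [← pow_succ, Nat.sub_add_cancel hp.out.one_le]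
  simp only [stepanovDerivation_apply, derivative_mul, hfrob, derivative_pow (truncatedLog p),
    smul_eq_C_mul]
  rw [mul_add p, mul_one, pow_add]
  linear_combination X * truncatedLog p ^ j * X ^ (p * k) *
    one_sub_X_mul_derivative_pow (ZMod p) i +
    X * (1 - X) ^ i * C (j : ZMod p) * truncatedLog p ^ (j - 1) * X ^ (p * k) *
    one_sub_X_mul_derivative_truncatedLog p +
    (1 - X) ^ i * C (j : ZMod p) * truncatedLog p ^ (j - 1) * X ^ (p * k) * hX

theorem stepanovDerivation_mem_stepanovSpace {t : ℕ} {f : (ZMod p)[X]}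
    (hf : f ∈ stepanovSpace p t) :
    stepanovDerivation (ZMod p) f ∈ stepanovSpace p (t + 1) := by
  suffices h : stepanovSpace p t ≤ (stepanovSpace p (t + 1)).comap (stepanovDerivation (ZMod p))
    from h hf
  refine Submodule.span_le.mpr ?_
  rintro _ ⟨i, j, k, hik, rfl⟩
  have hmem {i j k : ℕ} (hik : i + k ≤ t + 1) :
      (1 - X) ^ i * truncatedLog p ^ j * X ^ (p * k) ∈ stepanovSpace p (t + 1) :=
    Submodule.subset_span ⟨i, j, k, hik, rfl⟩
  rw [SetLike.mem_coe, Submodule.mem_comap, stepanovDerivation_monomial]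
  refine add_mem (sub_mem (Submodule.smul_mem _ _ (hmem (by omega)))
    (Submodule.smul_mem _ _ (hmem (by omega))))
    (Submodule.smul_mem _ _ (sub_mem (sub_mem ?_ ?_) ?_)) <;> exact hmem (by omega)

theorem iterate_stepanovDerivation_mem_stepanovSpace {t : ℕ} {f : (ZMod p)[X]}
    (hf : f ∈ stepanovSpace p t) (n : ℕ) :
    (stepanovDerivation (ZMod p))^[n] f ∈ stepanovSpace p (t + n) := by
  induction n with
  | zero => exact hf
  | succ n ih =>
    rw [Function.iterate_succ_apply']
    exact stepanovDerivation_mem_stepanovSpace ih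

/-- Restriction of polynomials to functions on the level set `truncatedLog p = c`. -/
def restrictToLevel (c : ZMod p) :
    (ZMod p)[X] →ₗ[ZMod p] ({x : ZMod p // (truncatedLog p).eval x = c} → ZMod p) :=
  LinearMap.pi fun x ↦ leval (x : ZMod p)

theorem restrictToLevel_apply (c : ZMod p) (f : (ZMod p)[X])
    (x : {x : ZMod p // (truncatedLog p).eval x = c}) :
    restrictToLevel c f x = f.eval (x : ZMod p) := rfl

theorem restrictToLevel_mem_map_degreeLT (c : ZMod p) {t : ℕ} {f : (ZMod p)[X]}
    (hf : f ∈ stepanovSpace p t) :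
    restrictToLevel c f ∈ (degreeLT (ZMod p) (t + 1)).map (restrictToLevel c) := by
  suffices h : stepanovSpace p t ≤
      ((degreeLT (ZMod p) (t + 1)).map (restrictToLevel c)).comap (restrictToLevel c) from h hf
  refine Submodule.span_le.mpr ?_
  rintro _ ⟨i, j, k, hik, rfl⟩
  refine ⟨C (c ^ j) * ((1 - X) ^ i * X ^ k), ?_, ?_⟩
  · have hdeg : (C (c ^ j) * ((1 - X) ^ i * X ^ k)).natDegree ≤ t := by
      compute_degree
      omega
    exact mem_degreeLT.mpr ((degree_le_of_natDegree_le hdeg).trans_lt (mod_cast t.lt_succ_self))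
  · ext x
    simp only [restrictToLevel_apply, eval_mul, eval_pow, eval_sub, eval_one, eval_X, eval_C,
      x.2, pow_mul, ZMod.pow_card]
    ring

/-- The auxiliary polynomial of the Stepanov argument, as a linear function of its coefficients, so
that vanishing conditions can be met by counting dimensions. -/
def stepanovPoly (p : ℕ) [Fact p.Prime] (A B C : ℕ) :
    (Fin C → Fin A → degreeLT (ZMod p) B) →ₗ[ZMod p] (ZMod p)[X] where
  toFun v := ∑ k : Fin C, X ^ (p * (k : ℕ)) *
    ∑ i : Fin A, (1 - X) ^ (i : ℕ) * (v k i : (ZMod p)[X]).comp (truncatedLog p)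
  map_add' v w := by
    simp only [Pi.add_apply, Submodule.coe_add, add_comp, mul_add, sum_add_distrib]
  map_smul' a v := by
    simp only [Pi.smul_apply, SetLike.val_smul, smul_comp, mul_smul_comm, ← smul_sum,
      RingHom.id_apply]

theorem stepanovPoly_apply {A B C : ℕ} (v : Fin C → Fin A → degreeLT (ZMod p) B) :
    stepanovPoly p A B C v = ∑ k : Fin C, X ^ (p * (k : ℕ)) *
      ∑ i : Fin A, (1 - X) ^ (i : ℕ) * (v k i : (ZMod p)[X]).comp (truncatedLog p) := rfl

theorem natDegree_stepanovPoly_le {A B C : ℕ} (v : Fin C → Fin A → degreeLT (ZMod p) B) :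
    (stepanovPoly p A B C v).natDegree ≤ (B + C) * p + A := by
  rw [stepanovPoly_apply]
  refine natDegree_sum_le_of_forall_le _ _ fun k _ ↦ ?_
  refine natDegree_mul_le.trans ?_
  rw [natDegree_X_pow]
  have hk : p * (k : ℕ) ≤ p * C := Nat.mul_le_mul_left _ k.2.le
  have hinner : (∑ i : Fin A, (1 - X) ^ (i : ℕ) *
      (v k i : (ZMod p)[X]).comp (truncatedLog p)).natDegree ≤ A + B * p := by
    refine natDegree_sum_le_of_forall_le _ _ fun i _ ↦ natDegree_mul_le.trans ?_
    refine Nat.add_le_add ((by compute_degree : _ ≤ (i : ℕ)).trans i.2.le) ?_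
    rw [natDegree_comp]
    exact Nat.mul_le_mul (natDegree_le_of_degree_le (mem_degreeLT.mp (v k i).2).le)
      (natDegree_truncatedLog_le p)
  linarith

theorem stepanovPoly_mem_stepanovSpace {A B C : ℕ} (v : Fin C → Fin A → degreeLT (ZMod p) B) :
    stepanovPoly p A B C v ∈ stepanovSpace p (A + C - 2) := by
  rw [stepanovPoly_apply]
  refine sum_mem fun k _ ↦ ?_
  rw [mul_sum]
  refine sum_mem fun i _ ↦ ?_
  rw [comp_eq_aeval, aeval_eq_sum_range, mul_sum, mul_sum]
  refine sum_mem fun j _ ↦ ?_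
  rw [mul_smul_comm, mul_smul_comm]
  exact Submodule.smul_mem _ _ (Submodule.subset_span
    ⟨i, j, k, by omega, mul_comm _ _⟩)

theorem stepanovPoly_ne_zero {A B C : ℕ} (hA : A ≤ p) (hAB : A * B ≤ p)
    {v : Fin C → Fin A → degreeLT (ZMod p) B} (hv : v ≠ 0) : stepanovPoly p A B C v ≠ 0 := by
  classical
  intro hzero
  obtain ⟨k₁, hk₁⟩ := Function.ne_iff.mp hv
  obtain ⟨k₀, hk₀, hmin⟩ := exists_min_image {k | v k ≠ 0} id ⟨k₁, by simpa using hk₁⟩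
  simp only [mem_filter, mem_univ, true_and, id] at hk₀ hmin
  let s : Finset (Fin A) := {i | v k₀ i ≠ 0}
  let Φ (k : Fin C) := ∑ i : Fin A, (1 - X) ^ (i : ℕ) *
    (v k i : (ZMod p)[X]).comp (truncatedLog p)
  have hΦ₀ : Φ k₀ =
      ∑ i ∈ s, (1 - X) ^ (i : ℕ) * (v k₀ i : (ZMod p)[X]).comp (truncatedLog p) :=
    (sum_filter_of_ne (p := (v k₀ · ≠ 0)) fun i _ hne h0 ↦ hne (by simp [h0])).symm
  have hsum : ∑ k : Fin C, X ^ (p * (k : ℕ)) * Φ k = 0 := hzero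
  have hdvd : X ^ (p * (k₀ : ℕ)) * X ^ p ∣ X ^ (p * (k₀ : ℕ)) * Φ k₀ := by
    rw [← pow_add, ← dvd_add_left (c := ∑ k ∈ univ.erase k₀, X ^ (p * (k : ℕ)) * Φ k),
      add_sum_erase univ (fun k : Fin C ↦ X ^ (p * (k : ℕ)) * Φ k) (mem_univ k₀)]
    · rw [hsum]
      exact dvd_zero _
    · refine dvd_sum fun k hk ↦ ?_
      rcases lt_or_gt_of_ne (ne_of_mem_erase hk) with hlt | hgt
      · have hvk : v k = 0 := by_contra fun h ↦ (hmin k h).not_gt hlt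
        simp [Φ, hvk]
      · exact (pow_dvd_pow X (by nlinarith [Fin.lt_def.mp hgt])).mul_right _
  have hdvd_Φ₀ := (mul_dvd_mul_iff_left (pow_ne_zero _ X_ne_zero)).mp hdvd
  rw [hΦ₀] at hdvd_Φ₀
  refine not_X_pow_dvd_sum_comp_truncatedLog hA le_rfl ?_ (fun i hi ↦ ?_) ?_ hdvd_Φ₀
  · obtain ⟨i, hi⟩ := Function.ne_iff.mp hk₀
    exact ⟨i, mem_filter.mpr ⟨mem_univ i, hi⟩⟩
  · simpa using (mem_filter.mp hi).2
  · calc ∑ i ∈ s, ((v k₀ i : (ZMod p)[X]).natDegree + 1)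
        ≤ ∑ _i ∈ s, B := sum_le_sum fun i hi ↦ Nat.succ_le_of_lt <|
          (natDegree_lt_iff_degree_lt (by simpa using (mem_filter.mp hi).2)).mpr
            (mem_degreeLT.mp (v k₀ i).2)
      _ ≤ A * B := by
        rw [sum_const, smul_eq_mul]
        exact Nat.mul_le_mul_right B (card_le_univ s |>.trans_eq (Fintype.card_fin A))
      _ ≤ p := hAB

theorem mul_card_truncatedLog_eq_le {A B C M : ℕ} (hA : A ≤ p) (hAB : A * B ≤ p) (hM₀ : 0 < M)
    (hMp : M ≤ p) (hdim : M * (A + C + M) ≤ A * B * C) (c : ZMod p) :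
    M * #{x : ZMod p | (truncatedLog p).eval x = c ∧ x ≠ 0 ∧ x ≠ 1} ≤ (B + C) * p + A := by
  let φ (j : Fin M) : (Fin C → Fin A → degreeLT (ZMod p) B) →ₗ[ZMod p] _ :=
    restrictToLevel c ∘ₗ (stepanovDerivation (ZMod p) ^ (j : ℕ)) ∘ₗ stepanovPoly p A B C
  have hA₀ : 0 < A := Nat.pos_of_ne_zero fun h ↦ by
    rw [h, zero_mul, zero_mul] at hdim
    exact hdim.not_gt (by positivity)
  have hmem (j : Fin M) (v) :
      φ j v ∈ (degreeLT (ZMod p) (A + C - 2 + j + 1)).map (restrictToLevel c) := by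
    refine restrictToLevel_mem_map_degreeLT c ?_
    rw [LinearMap.comp_apply, Module.End.pow_apply]
    exact iterate_stepanovDerivation_mem_stepanovSpace (stepanovPoly_mem_stepanovSpace v) j
  have hrange (j : Fin M) : Module.finrank (ZMod p) (LinearMap.range (φ j)) < A + C + M :=
    (finrank_range_le_of_forall_mem_map_degreeLT (hmem j)).trans_lt (by omega)
  have hsum : ∑ j, Module.finrank (ZMod p) (LinearMap.range (φ j)) <
      Module.finrank (ZMod p) (Fin C → Fin A → degreeLT (ZMod p) B) := by
    calc ∑ j, Module.finrank (ZMod p) (LinearMap.range (φ j))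
        < ∑ _j : Fin M, (A + C + M) :=
          sum_lt_sum_of_nonempty ⟨⟨0, hM₀⟩, mem_univ _⟩ fun j _ ↦ hrange j
      _ ≤ A * B * C := by simpa using hdim
      _ = _ := by
        simp only [Module.finrank_pi_fintype, (degreeLTEquiv (ZMod p) B).finrank_eq, sum_const,
          Finset.card_univ, Fintype.card_fin, smul_eq_mul, Module.finrank_self]
        ring
  obtain ⟨v, hv, hφv⟩ := exists_ne_zero_forall_apply_eq_zero φ hsum
  refine (card_mul_le_natDegree fun x hx ↦ ?_).trans (natDegree_stepanovPoly_le v)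
  obtain ⟨hxc, hx₀, hx₁⟩ := (mem_filter.mp hx).2
  refine (le_rootMultiplicity_iff (stepanovPoly_ne_zero hA hAB hv)).mpr
    (X_sub_C_pow_dvd_of_iterate_stepanovDerivation hMp hx₀ hx₁ fun j hj ↦ ?_)
  rw [← Module.End.pow_apply]
  exact congrFun (hφv ⟨j, hj⟩) ⟨x, hxc⟩

/-- The parameters are `A = 4e²`, `B = C = 2e` and `M = 2e²`. -/
theorem card_truncatedLog_eq_le {e : ℕ} (he : 0 < e) (hep : 8 * e ^ 3 ≤ p) (c : ZMod p) :
    (#{x : ZMod p | (truncatedLog p).eval x = c} : ℝ) ≤ 2 * p / e + 4 := by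
  have hstepanov := mul_card_truncatedLog_eq_le (A := 4 * e ^ 2) (B := 2 * e) (C := 2 * e)
    (M := 2 * e ^ 2) (by nlinarith) (by nlinarith) (by positivity) (by nlinarith)
    (by nlinarith [pow_pos he 3]) c
  have hcard : #{x : ZMod p | (truncatedLog p).eval x = c} ≤
      #{x : ZMod p | (truncatedLog p).eval x = c ∧ x ≠ 0 ∧ x ≠ 1} + 2 := by
    refine (card_le_card fun x hx ↦ ?_).trans
      ((card_union_le _ {0, 1}).trans (Nat.add_le_add_left card_le_two _))
    simp only [mem_union, mem_filter, mem_univ, true_and, mem_insert, mem_singleton] at hx ⊢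
    tauto
  have he' : (0 : ℝ) < e := mod_cast he
  have hmul : (e : ℝ) * #{x : ZMod p | (truncatedLog p).eval x = c ∧ x ≠ 0 ∧ x ≠ 1} ≤
      2 * p + 2 * e := by
    refine le_of_mul_le_mul_left ?_ (by positivity : (0 : ℝ) < 2 * e)
    have := (Nat.cast_le (α := ℝ)).mpr hstepanov
    push_cast at this
    nlinarith
  have hcard' := (Nat.cast_le (α := ℝ)).mpr hcard
  push_cast at hcard'
  rw [div_add' _ _ _ he'.ne', le_div_iff₀ he']
  nlinarith

end Stepanov

section Heilbronn

open Polynomial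

variable {p : ℕ} [hp : Fact p.Prime]

theorem stdAddChar_prime_mul (n : ℤ) :
    ZMod.stdAddChar (N := p ^ 2) ((p * n : ℤ) : ZMod (p ^ 2)) =
      ZMod.stdAddChar (n : ZMod p) := by
  rw [ZMod.stdAddChar_coe, ZMod.stdAddChar_coe]
  congr 1
  have hp0 : (p : ℂ) ≠ 0 := mod_cast hp.out.ne_zero
  push_cast
  field_simp

theorem intCast_prime_mul_eq_zero_iff (n : ℤ) :
    ((p * n : ℤ) : ZMod (p ^ 2)) = 0 ↔ (n : ZMod p) = 0 := by
  have hp0 : (p : ℤ) ≠ 0 := mod_cast hp.out.ne_zero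
  rw [ZMod.intCast_zmod_eq_zero_iff_dvd, ZMod.intCast_zmod_eq_zero_iff_dvd, Nat.cast_pow, sq,
    mul_dvd_mul_iff_left hp0]

theorem intCast_pow_prime_eq_of_intCast_eq {a b : ℤ} (h : (a : ZMod p) = b) :
    (a : ZMod (p ^ 2)) ^ p = (b : ZMod (p ^ 2)) ^ p := by
  have hdvd := dvd_sub_pow_of_dvd_sub ((ZMod.intCast_eq_intCast_iff_dvd_sub b a p).mp h.symm) 1
  rw [pow_one, one_add_one_eq_two] at hdvd
  have := (ZMod.intCast_eq_intCast_iff_dvd_sub (b ^ p) (a ^ p) (p ^ 2)).mpr (mod_cast hdvd)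
  exact_mod_cast this.symm

variable (p) in
/-- The multiplicative section of the reduction map modulo `p²`, sending `x` to the `p`-th power of
any of its lifts. -/
def teichmullerLift : ZMod p →* ZMod (p ^ 2) where
  toFun x := ((x.val : ℤ) : ZMod (p ^ 2)) ^ p
  map_one' := by
    rw [intCast_pow_prime_eq_of_intCast_eq (b := 1) (by simp), Int.cast_one, one_pow]
  map_mul' x y := by
    rw [← mul_pow, ← Int.cast_mul]
    exact intCast_pow_prime_eq_of_intCast_eq (by simp)

theorem teichmullerLift_intCast (z : ℤ) :
    teichmullerLift p (z : ZMod p) = (z : ZMod (p ^ 2)) ^ p :=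
  intCast_pow_prime_eq_of_intCast_eq (by simp)

theorem teichmullerLift_neg (hp2 : p ≠ 2) (x : ZMod p) :
    teichmullerLift p (-x) = -teichmullerLift p x := by
  obtain ⟨z, rfl⟩ := ZMod.intCast_surjective x
  rw [← Int.cast_neg, teichmullerLift_intCast, teichmullerLift_intCast, Int.cast_neg,
    (hp.out.odd_of_ne_two hp2).neg_pow]

theorem one_sub_teichmullerLift_sub (z : ℤ) :
    1 - teichmullerLift p z - teichmullerLift p (1 - z) =
      ((p * (fermatQuotientPoly p).eval z : ℤ) : ZMod (p ^ 2)) := by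
  have heval := congrArg (fun f : ℤ[X] ↦ ((f.eval z : ℤ) : ZMod (p ^ 2))) (one_sub_X_pow_sub_eq p)
  simp only [eval_sub, eval_one, eval_pow, eval_X, eval_mul, eval_C] at heval
  have hcast : 1 - (z : ZMod p) = ((1 - z : ℤ) : ZMod p) := by push_cast; rfl
  rw [hcast, teichmullerLift_intCast, teichmullerLift_intCast, ← heval]
  push_cast
  rfl

theorem eval_truncatedLog_eq_of_teichmullerLift_add_eq {x y : ZMod p}
    (h : teichmullerLift p x + teichmullerLift p (1 - x) =
      teichmullerLift p y + teichmullerLift p (1 - y)) :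
    (truncatedLog p).eval x = (truncatedLog p).eval y := by
  obtain ⟨a, rfl⟩ := ZMod.intCast_surjective x
  obtain ⟨b, rfl⟩ := ZMod.intCast_surjective y
  have heq := one_sub_teichmullerLift_sub (p := p) a
  rw [sub_sub, h, ← sub_sub, one_sub_teichmullerLift_sub, ← sub_eq_zero, ← Int.cast_sub,
    ← mul_sub, intCast_prime_mul_eq_zero_iff, Int.cast_sub, sub_eq_zero] at heq
  rw [truncatedLog, eval_intCast_map, eval_intCast_map]
  simpa using heq.symm

theorem exists_teichmullerLift_add_sub_eq {x₁ x₂ x₃ x₄ : ZMod p} (h : x₁ + x₂ = x₃ + x₄) :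
    ∃ f : ℤ, teichmullerLift p x₁ + teichmullerLift p x₂ -
      (teichmullerLift p x₃ + teichmullerLift p x₄) = ((p * f : ℤ) : ZMod (p ^ 2)) := by
  obtain ⟨a₁, rfl⟩ := ZMod.intCast_surjective x₁
  obtain ⟨a₂, rfl⟩ := ZMod.intCast_surjective x₂
  obtain ⟨a₃, rfl⟩ := ZMod.intCast_surjective x₃
  obtain ⟨a₄, rfl⟩ := ZMod.intCast_surjective x₄
  have hzero : ((a₁ ^ p + a₂ ^ p - (a₃ ^ p + a₄ ^ p) : ℤ) : ZMod p) = 0 := by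
    push_cast
    rw [ZMod.pow_card, ZMod.pow_card, ZMod.pow_card, ZMod.pow_card, h, sub_self]
  obtain ⟨f, hf⟩ := (ZMod.intCast_zmod_eq_zero_iff_dvd _ p).mp hzero
  refine ⟨f, ?_⟩
  rw [← hf]
  simp only [teichmullerLift_intCast]
  push_cast
  rfl

variable (p) in
/-- The summand `exp(2πi a u ^ p / p²)` of Heilbronn's exponential sum. -/
def heilbronnPhase (a : ℤ) (u : (ZMod p)ˣ) : ℂ :=
  ZMod.stdAddChar (N := p ^ 2) ((a : ZMod (p ^ 2)) * teichmullerLift p u)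

theorem norm_heilbronnPhase_le_one (a : ℤ) (u : (ZMod p)ˣ) : ‖heilbronnPhase p a u‖ ≤ 1 :=
  (AddChar.norm_apply _ _).le

theorem quadrupleProduct_heilbronnPhase (a : ℤ)
    {z : ((ZMod p)ˣ × (ZMod p)ˣ) × ((ZMod p)ˣ × (ZMod p)ˣ)} {f : ℤ}
    (hf : teichmullerLift p z.1.1 + teichmullerLift p z.1.2 -
      (teichmullerLift p z.2.1 + teichmullerLift p z.2.2) = ((p * f : ℤ) : ZMod (p ^ 2)))
    (u : (ZMod p)ˣ) :
    quadrupleProduct (heilbronnPhase p a) z u = ZMod.stdAddChar (N := p) (a * f * u) := by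
  obtain ⟨U, hU⟩ := ZMod.intCast_surjective (u : ZMod p)
  have harg : (a * f * u : ZMod p) = ((a * U ^ p * f : ℤ) : ZMod p) := by
    push_cast
    rw [ZMod.pow_card, hU]
    ring
  rw [harg, ← stdAddChar_prime_mul]
  simp only [quadrupleProduct, heilbronnPhase, Units.val_mul, map_mul (teichmullerLift p)]
  rw [← AddChar.map_add_eq_mul, ← AddChar.map_add_eq_mul, ← AddChar.inv_apply_eq_conj,
    ← AddChar.map_neg_eq_inv, ← AddChar.map_add_eq_mul, ← hU, teichmullerLift_intCast]
  congr 1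
  push_cast at hf ⊢
  linear_combination (a : ZMod (p ^ 2)) * (U : ZMod (p ^ 2)) ^ p * hf

/-- Scaling by `(a - c)⁻¹` turns `τ a - τ c = τ e - τ b` into the equation
`τ x + τ (1 - x) = τ y + τ (1 - y)` with `x = a / (a - c)` and `y = e / (a - c)`. -/
theorem eval_truncatedLog_div_eq (hp2 : p ≠ 2) {a b c e : ZMod p} (hac : a ≠ c)
    (hadd : a + b = c + e)
    (hlift : teichmullerLift p a + teichmullerLift p b =
      teichmullerLift p c + teichmullerLift p e) :
    (truncatedLog p).eval ((a - c)⁻¹ * e) = (truncatedLog p).eval ((a - c)⁻¹ * a) := by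
  have hd : (a - c)⁻¹ * (a - c) = 1 := inv_mul_cancel₀ (sub_ne_zero.mpr hac)
  have he : 1 - (a - c)⁻¹ * e = -((a - c)⁻¹ * b) := by
    linear_combination -hd + (a - c)⁻¹ * hadd
  have ha : 1 - (a - c)⁻¹ * a = -((a - c)⁻¹ * c) := by linear_combination -hd
  refine eval_truncatedLog_eq_of_teichmullerLift_add_eq ?_
  rw [he, ha, teichmullerLift_neg hp2, teichmullerLift_neg hp2]
  simp only [map_mul]
  linear_combination -teichmullerLift p (a - c)⁻¹ * hlift

theorem norm_sum_heilbronnPhase_pow_four_le (hp2 : p ≠ 2) {a : ℤ} (ha : (a : ZMod p) ≠ 0) {B : ℕ}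
    (hB : ∀ c, #{x : ZMod p | (truncatedLog p).eval x = c} ≤ B) :
    ‖∑ u, heilbronnPhase p a u‖ ^ 4 ≤ (p : ℝ) ^ 3 * (B + 2) := by
  have hbound := norm_sum_units_pow_four_le_of_exceptional (norm_heilbronnPhase_le_one (p := p) a)
    (B := B) zero_le_one (fun z ↦ teichmullerLift p z.1.1 + teichmullerLift p z.1.2 =
      teichmullerLift p z.2.1 + teichmullerLift p z.2.2) (fun b c hbc ↦ ?_) fun z hz hgen ↦ ?_
  · rw [ZMod.card] at hbound
    exact hbound.trans_eq (by ring)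
  · have hne : (b : ZMod p) ≠ c := fun h ↦ hbc (Units.ext h)
    refine ⟨({x | (truncatedLog p).eval x = (truncatedLog p).eval ((b - c : ZMod p)⁻¹ * b)} :
      Finset (ZMod p)).image ((b - c : ZMod p) * ·), card_image_le.trans (hB _),
      fun b' e hadd hlift ↦ ?_⟩
    refine mem_image.mpr ⟨(b - c : ZMod p)⁻¹ * e, mem_filter.mpr ⟨mem_univ _,
      eval_truncatedLog_div_eq hp2 hne hadd hlift⟩, ?_⟩
    exact mul_inv_cancel_left₀ (sub_ne_zero.mpr hne) _
  · obtain ⟨f, hf⟩ := exists_teichmullerLift_add_sub_eq hz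
    have hf0 : (f : ZMod p) ≠ 0 := fun h ↦
      hgen (sub_eq_zero.mp (hf.trans ((intCast_prime_mul_eq_zero_iff f).mpr h)))
    have hsum := AddChar.sum_mulShift (a * f : ZMod p) (ZMod.isPrimitive_stdAddChar p)
    rw [if_neg (mul_ne_zero ha hf0), sum_eq_sum_units_add, zero_mul, AddChar.map_zero_eq_one,
      Nat.cast_zero] at hsum
    simp only [quadrupleProduct_heilbronnPhase a hf, mul_comm (a * f : ZMod p)]
    rw [eq_neg_of_add_eq_zero_left hsum, norm_neg, norm_one]

theorem norm_sum_heilbronnPhase_mul_pow_four_le {a : ℤ} {Q : (ZMod p)[X]}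
    (hQ : Q.natDegree ≠ 0) {k : ℝ}
    (hk : ∀ (A : ZMod p) (R : (ZMod p)[X]), R.natDegree = Q.natDegree →
      ‖∑ u : (ZMod p)ˣ, ZMod.stdAddChar (A * (u : ZMod p) + R.eval (↑u⁻¹ : ZMod p))‖ ≤ k) :
    ‖∑ u, heilbronnPhase p a u * ZMod.stdAddChar (Q.eval (↑u⁻¹ : ZMod p))‖ ^ 4 ≤
      (p : ℝ) ^ 3 * (2 * Q.natDegree + 1 + k) := by
  have hbound := norm_sum_inverse_twist_pow_four_le (ZMod.stdAddChar (N := p))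
    (norm_heilbronnPhase_le_one (p := p) a) hQ ((norm_nonneg _).trans (hk 0 Q rfl))
    fun z hz R hR ↦ ?_
  · rwa [ZMod.card] at hbound
  · obtain ⟨f, hf⟩ := exists_teichmullerLift_add_sub_eq hz
    simp only [quadrupleProduct_heilbronnPhase a hf, ← AddChar.map_add_eq_mul]
    exact hk _ R hR

end Heilbronn

section Numerics

open Polynomial Real
open scoped Nat

variable {p w : ℕ} {κ : ℝ}

theorem pow_le_exp_mul {t : ℝ} (ht : 0 ≤ t) (n : ℕ) : (1 + t) ^ n ≤ exp (n * t) := by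
  rw [exp_nat_mul, add_comm]
  exact pow_le_pow_left₀ (by positivity) (add_one_le_exp t) n

theorem sq_mul_exp_le (hκ : 1 ≤ κ) (hw : exp (14 * κ * w) ≤ 2 * p) {n : ℕ} (hn : n + 3 ≤ w) :
    (n : ℝ) ^ 2 * exp (n * (13.6 * κ)) ≤ p := by
  have hn' : (n : ℝ) + 3 ≤ w := mod_cast hn
  have hn0 : (0 : ℝ) ≤ n := n.cast_nonneg
  have hsq : 2 * (n : ℝ) ^ 2 ≤ (1 + (n * κ / 10 + 10)) ^ 4 := by
    have hamgm : 4 * (n : ℝ) ≤ (1 + (n * κ / 10 + 10)) ^ 2 := by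
      nlinarith [sq_nonneg (n * κ / 10 - 10), mul_nonneg hn0 (sub_nonneg.mpr hκ)]
    nlinarith [pow_le_pow_left₀ (by positivity) hamgm 2]
  have hexp : exp ((4 : ℕ) * (n * κ / 10 + 10)) * exp (n * (13.6 * κ)) ≤ exp (14 * κ * w) := by
    rw [← exp_add, exp_le_exp]
    push_cast
    nlinarith
  have hle := hsq.trans (pow_le_exp_mul (by positivity) 4)
  nlinarith [mul_le_mul_of_nonneg_right hle (exp_pos (n * (13.6 * κ))).le]

theorem lt_of_exp_mul_le (hκ : 1 ≤ κ) (hw : exp (14 * κ * w) ≤ 2 * p) : w < p := by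
  have hlin := add_one_le_exp (14 * κ * w)
  have : (w : ℝ) < p := by nlinarith [w.cast_nonneg (α := ℝ)]
  exact_mod_cast this

theorem exp_neg_add_le (hκ : 1 ≤ κ) {a : ℝ} (ha : a ≤ 6.8) :
    exp (-(a * κ)) + 12 * exp (-(14 * κ)) ≤ exp (-((a - 0.05) * κ)) := by
  have hfactor : exp (-((a - 0.05) * κ)) = exp (-(a * κ)) * exp (0.05 * κ) := by
    rw [← exp_add]
    ring_nf
  have hsmall : exp (-(14 * κ)) * exp 7 ≤ exp (-(a * κ)) := by
    rw [← exp_add, exp_le_exp]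
    nlinarith
  have hseven := pow_le_exp_mul one_half_pos.le 14
  norm_num at hseven
  nlinarith [add_one_le_exp (0.05 * κ), exp_pos (-(14 * κ)), exp_pos (-(a * κ))]

theorem le_mul_exp_of_pow_four_le (hκ : 1 ≤ κ) {a b k x y : ℝ} (ha : a ≤ 6.8)
    (hab : 4 * b ≤ a - 0.05) (hx : 0 ≤ x) (hy : 0 ≤ y)
    (hxk : x ^ 4 ≤ y ^ 3 * (k + y * exp (-(a * κ))))
    (hk : k ≤ 12 * y * exp (-(14 * κ))) : x ≤ y * exp (-(b * κ)) := by
  refine (pow_le_pow_iff_left₀ hx (by positivity) four_ne_zero).mp (hxk.trans ?_)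
  calc y ^ 3 * (k + y * exp (-(a * κ)))
      ≤ y ^ 3 * (12 * y * exp (-(14 * κ)) + y * exp (-(a * κ))) := by gcongr
    _ = y ^ 4 * (exp (-(a * κ)) + 12 * exp (-(14 * κ))) := by ring
    _ ≤ y ^ 4 * exp ((4 : ℕ) * -(b * κ)) := by
        refine mul_le_mul_of_nonneg_left ((exp_neg_add_le hκ ha).trans ?_) (by positivity)
        rw [exp_le_exp]
        push_cast
        nlinarith
    _ = (y * exp (-(b * κ))) ^ 4 := by rw [mul_pow, ← exp_nat_mul]

theorem two_mul_add_four_le (hκ : 1 ≤ κ) (hw : exp (14 * κ * w) ≤ 2 * p) (hpos : 1 ≤ w) :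
    2 * (w : ℝ) + 4 ≤ 12 * p * exp (-(14 * κ)) := by
  have hsplit : exp (14 * κ * (w - 1)) = exp (14 * κ * w) * exp (-(14 * κ)) := by
    rw [← exp_add]
    ring_nf
  have hw1 : (1 : ℝ) ≤ w := mod_cast hpos
  nlinarith [add_one_le_exp (14 * κ * (w - 1)), exp_pos (-(14 * κ))]

theorem two_mul_div_floor_exp_le (hκ : 1 ≤ κ) :
    2 * (p : ℝ) / ⌊exp (3 * κ)⌋₊ ≤ p * exp (-(1.65 * κ)) := by
  have hgrow := add_one_le_exp (1.65 * κ)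
  have hgrow' := pow_le_exp_mul (t := 1.35 * κ / 2) (by positivity) 2
  rw [Nat.cast_ofNat, mul_div_cancel₀ _ two_ne_zero] at hgrow'
  have hsplit : exp (3 * κ) = exp (1.65 * κ) * exp (1.35 * κ) := by
    rw [← exp_add]
    ring_nf
  have hfloor : 2 * exp (1.65 * κ) ≤ ⌊exp (3 * κ)⌋₊ := by
    have hratio : 2.8 ≤ exp (1.35 * κ) := by nlinarith
    nlinarith [Nat.lt_floor_add_one (exp (3 * κ))]
  have hpos : (0 : ℝ) < ⌊exp (3 * κ)⌋₊ := (by positivity : 0 < 2 * exp (1.65 * κ)).trans_le hfloor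
  rw [exp_neg, div_le_iff₀ hpos, ← div_eq_mul_inv, div_mul_eq_mul_div, le_div_iff₀ (exp_pos _)]
  nlinarith [p.cast_nonneg (α := ℝ)]

theorem eight_mul_floor_exp_pow_le (hκ : 1 ≤ κ) (hpκ : exp (14 * κ) ≤ 2 * p) :
    8 * ⌊exp (3 * κ)⌋₊ ^ 3 ≤ p := by
  have hfloor : (⌊exp (3 * κ)⌋₊ : ℝ) ≤ exp (3 * κ) := Nat.floor_le (exp_pos _).le
  have hgrow : (16 : ℝ) ≤ exp (5 * κ) := by
    refine le_trans ?_ ((pow_le_exp_mul zero_le_one 5).trans (exp_le_exp.mpr ?_))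
    · norm_num
    · push_cast
      linarith
  have hcube : 16 * (⌊exp (3 * κ)⌋₊ : ℝ) ^ 3 ≤ 2 * p :=
    calc _ ≤ exp (5 * κ) * exp (3 * κ) ^ 3 := by gcongr
      _ = exp (14 * κ) := by rw [← exp_nat_mul, ← exp_add]; push_cast; ring_nf
      _ ≤ _ := hpκ
  have hcube' : (8 : ℝ) * (⌊exp (3 * κ)⌋₊ : ℝ) ^ 3 ≤ p := by linarith
  exact_mod_cast hcube'

theorem one_add_mul_exp_le_div (hκ : 1 ≤ κ) (hpκ : exp (14 * κ) ≤ 2 * p) :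
    1 + p * exp (-(0.4 * κ)) ≤ p / κ := by
  have hκ0 : 0 < κ := by linarith
  have hdecay : 1.08 * κ * exp (-(0.4 * κ)) ≤ 1 := by
    have hgrow : 2.7 * (0.4 * κ) ≤ exp (0.4 * κ) := by
      have htangent := add_one_le_exp (0.4 * κ - 1)
      rw [sub_add_cancel, exp_sub, le_div_iff₀ (exp_pos 1)] at htangent
      nlinarith [exp_one_gt_d9]
    rw [exp_neg, ← div_eq_mul_inv, div_le_one (exp_pos _)]
    linarith
  have hlarge : 13.5 * κ ≤ p := by
    have := (pow_le_exp_mul (t := 7 * κ) (by positivity) 2).trans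
      ((exp_le_exp.mpr (by push_cast; linarith)).trans hpκ)
    nlinarith
  rw [le_div_iff₀ hκ0]
  nlinarith

variable [hp : Fact p.Prime]

theorem natCast_factorial_ne_zero {n : ℕ} (hn : n < p) : (n ! : ZMod p) ≠ 0 := by
  rwa [Ne, ZMod.natCast_eq_zero_iff, hp.out.dvd_factorial, not_le]

theorem sum_stdAddChar_eval_eq_zero {f : (ZMod p)[X]} (hf : f.natDegree = 1) :
    ∑ x, ZMod.stdAddChar (f.eval x) = 0 := by
  have hlead : f.coeff 1 ≠ 0 := hf ▸ leadingCoeff_ne_zero.mpr (by rintro rfl; simp at hf)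
  have hsum := AddChar.sum_mulShift (f.coeff 1) (ZMod.isPrimitive_stdAddChar p)
  rw [if_neg hlead, Nat.cast_zero] at hsum
  simp only [eval_eq_sum_range, hf, sum_range_succ, range_zero, sum_empty, zero_add, pow_zero,
    mul_one, pow_one, AddChar.map_add_eq_mul, ← mul_sum]
  simp only [mul_comm (f.coeff 1), hsum, mul_zero]

theorem norm_sum_stdAddChar_eval_pow_le {f : (ZMod p)[X]} {n : ℕ} (hn : n ≠ 0)
    (hf : f.natDegree = n + 1) (hnp : n + 1 < p) :
    ‖∑ x, ZMod.stdAddChar (f.eval x)‖ ^ (2 * n) * p ≤ (n : ℝ) ^ 2 * p ^ (2 * n) := by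
  have hψ : ZMod.stdAddChar (N := p) ≠ 1 := by
    simpa using ZMod.isPrimitive_stdAddChar p one_ne_zero
  have hmordell := norm_sum_addChar_poly_pow_le hψ hf (natCast_factorial_ne_zero hnp)
  rw [ZMod.card] at hmordell
  have hfac : (n ! : ℝ) ^ 2 ≤ ((n : ℝ) ^ 2) ^ n := by
    rw [pow_right_comm]
    exact pow_le_pow_left₀ (by positivity) (mod_cast n.factorial_le_pow) 2
  refine (pow_le_pow_iff_left₀ (by positivity) (by positivity) hn).mp ?_
  calc _ = ‖∑ x, ZMod.stdAddChar (f.eval x)‖ ^ (2 * n * n) * p ^ n := by rw [mul_pow, ← pow_mul]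
    _ ≤ _ := hmordell
    _ ≤ ((n : ℝ) ^ 2) ^ n * p ^ (2 * n * n) := by gcongr
    _ = _ := by rw [mul_pow, ← pow_mul (p : ℝ)]

theorem norm_sum_stdAddChar_eval_le (hκ : 1 ≤ κ) (hw : exp (14 * κ * w) ≤ 2 * p)
    {f : (ZMod p)[X]} (hf : f.natDegree ≠ 0) (hfw : f.natDegree + 2 ≤ w) :
    ‖∑ x, ZMod.stdAddChar (f.eval x)‖ ≤ p * exp (-(6.8 * κ)) := by
  obtain ⟨n, hn⟩ := Nat.exists_eq_succ_of_ne_zero hf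
  obtain rfl | hn0 := n.eq_zero_or_pos
  · rw [sum_stdAddChar_eval_eq_zero hn, norm_zero]
    positivity
  have hwp := lt_of_exp_mul_le hκ hw
  have hexp : (n : ℝ) ^ 2 ≤ p * exp ((2 * n : ℕ) * -(6.8 * κ)) := by
    have := sq_mul_exp_le hκ hw (n := n) (by omega)
    rwa [← le_div_iff₀ (exp_pos _), div_eq_mul_inv, ← exp_neg,
      show -(n * (13.6 * κ)) = (2 * n : ℕ) * -(6.8 * κ) by push_cast; ring] at this
  refine (pow_le_pow_iff_left₀ (n := 2 * n) (by positivity) (by positivity) (by omega)).mp ?_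
  refine le_of_mul_le_mul_right ?_ (Nat.cast_pos.mpr hp.out.pos : (0 : ℝ) < p)
  calc _ ≤ (n : ℝ) ^ 2 * p ^ (2 * n) :=
        norm_sum_stdAddChar_eval_pow_le hn0.ne' hn (by omega)
    _ ≤ p * exp ((2 * n : ℕ) * -(6.8 * κ)) * p ^ (2 * n) := by gcongr
    _ = (p * exp (-(6.8 * κ))) ^ (2 * n) * p := by rw [mul_pow, ← exp_nat_mul]; ring

theorem norm_sum_heilbronnPhase_mul_le (hκ : 1 ≤ κ) (hw : exp (14 * κ * w) ≤ 2 * p) (a : ℤ)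
    {Q : (ZMod p)[X]} (hQ : Q.natDegree ≠ 0) (hQw : Q.natDegree + 2 ≤ w) :
    ‖∑ u, heilbronnPhase p a u * ZMod.stdAddChar (Q.eval (↑u⁻¹ : ZMod p))‖ ≤
      p * exp (-(0.4 * κ)) := by
  have hdeg : (Q.natDegree : ℝ) + 2 ≤ w := mod_cast hQw
  have hsmall := two_mul_add_four_le hκ hw (by omega)
  have hlaurent (A : ZMod p) (R : (ZMod p)[X]) (hR : R.natDegree = Q.natDegree) :
      ‖∑ u : (ZMod p)ˣ, ZMod.stdAddChar (A * (u : ZMod p) + R.eval (↑u⁻¹ : ZMod p))‖ ≤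
        p * exp (-(1.6875 * κ)) := by
    refine le_mul_exp_of_pow_four_le hκ le_rfl (by norm_num) (norm_nonneg _) p.cast_nonneg
      (k := 2 * Q.natDegree + 2) ?_ (by linarith)
    have := norm_sum_linear_add_inv_pow_four_le (ZMod.stdAddChar (N := p)) A (hR ▸ hQ) fun f hf ↦
      norm_sum_stdAddChar_eval_le hκ hw (f := f) (by omega) (by omega)
    rwa [ZMod.card, hR] at this
  exact le_mul_exp_of_pow_four_le hκ (a := 1.6875) (by norm_num) (by norm_num) (norm_nonneg _)
    p.cast_nonneg (norm_sum_heilbronnPhase_mul_pow_four_le hQ hlaurent) (by linarith)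

theorem norm_sum_heilbronnPhase_le (hκ : 1 ≤ κ) (hpκ : exp (14 * κ) ≤ 2 * p) {a : ℤ}
    (ha : (a : ZMod p) ≠ 0) : ‖∑ u, heilbronnPhase p a u‖ ≤ p * exp (-(0.4 * κ)) := by
  have hlin := add_one_le_exp (14 * κ)
  have hp2 : p ≠ 2 := by
    rintro rfl
    push_cast at hpκ
    linarith
  have hfloor : 0 < ⌊exp (3 * κ)⌋₊ := Nat.floor_pos.mpr (one_le_exp (by positivity))
  have hstepanov := card_truncatedLog_eq_le hfloor (eight_mul_floor_exp_pow_le hκ hpκ)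
  have hheil := norm_sum_heilbronnPhase_pow_four_le hp2 ha fun c ↦ Nat.le_floor (hstepanov c)
  have hB := Nat.floor_le (by positivity : 0 ≤ 2 * (p : ℝ) / ⌊exp (3 * κ)⌋₊ + 4)
  refine le_mul_exp_of_pow_four_le hκ (a := 1.65) (k := 6) (by norm_num) (by norm_num)
    (norm_nonneg _) p.cast_nonneg (hheil.trans ?_) ?_
  · refine mul_le_mul_of_nonneg_left ?_ (by positivity)
    linarith [two_mul_div_floor_exp_le (p := p) hκ]
  · have := two_mul_add_four_le hκ (w := 1) (p := p) (by simpa using hpκ) le_rfl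
    rw [Nat.cast_one] at this
    linarith

theorem one_add_norm_sum_heilbronnPhase_mul_le (hκ : 1 ≤ κ) (hw : exp (14 * κ * w) ≤ 2 * p)
    (hpos : 1 ≤ w) {a : ℤ} (ha : (a : ZMod p) ≠ 0) {Q : (ZMod p)[X]}
    (hQw : Q.natDegree ≤ w - 2) :
    1 + ‖∑ u, heilbronnPhase p a u * ZMod.stdAddChar (Q.eval (↑u⁻¹ : ZMod p))‖ ≤ p / κ := by
  have hpκ : exp (14 * κ) ≤ 2 * p := by
    refine (exp_le_exp.mpr (le_mul_of_one_le_right (by positivity) ?_)).trans hw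
    exact_mod_cast hpos
  refine (add_le_add_right ?_ 1).trans (one_add_mul_exp_le_div hκ hpκ)
  by_cases hQ : Q.natDegree = 0
  · obtain ⟨c, rfl⟩ := natDegree_eq_zero.mp hQ
    simp only [eval_C, ← sum_mul, norm_mul, AddChar.norm_apply, mul_one]
    exact norm_sum_heilbronnPhase_le hκ hpκ ha
  · exact norm_sum_heilbronnPhase_mul_le hκ hw a hQ (by omega)

end Numerics

section CompleteSums

open Polynomial

theorem sum_range_eq_sum_val {M : Type*} [AddCommMonoid M] (n : ℕ) [NeZero n] (g : ℕ → M) :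
    ∑ a ∈ range n, g a = ∑ u : ZMod n, g u.val := by
  obtain ⟨m, rfl⟩ := Nat.exists_eq_succ_of_ne_zero (NeZero.ne n)
  exact sum_range g

theorem sum_range_sq_eq_sum_sum {M : Type*} [AddCommMonoid M] (n : ℕ) [NeZero n] (g : ℕ → M) :
    ∑ h ∈ range (n ^ 2), g h = ∑ u : ZMod n, ∑ b : ZMod n, g (u.val + n * b.val) := by
  rw [sq, sum_range, ← finProdFinEquiv.sum_comp, Fintype.sum_prod_type_right,
    ← sum_range_eq_sum_val n fun u ↦ ∑ b : ZMod n, g (u + n * b.val), sum_range]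
  refine sum_congr rfl fun u _ ↦ ?_
  rw [← sum_range_eq_sum_val n fun b ↦ g (u + n * b), sum_range]
  rfl

theorem card_roots_le_natDegree_sub {K : Type*} [Field K] [Fintype K] [DecidableEq K] {g : K[X]}
    (hg : g ≠ 0) : #{x | g.eval x = 0} ≤ g.natDegree - g.natTrailingDegree + 1 := by
  have hsub : ({x | g.eval x = 0} : Finset K) ⊆
      insert 0 (g.roots.filter (¬0 = ·)).toFinset := fun x hx ↦ by
    by_cases hx0 : x = 0
    · simp [hx0]
    · simpa [hx0, Ne.symm hx0, hg] using hx
  have hsplit : (g.roots.filter (¬0 = ·)).card + g.natTrailingDegree = g.roots.card := by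
    rw [← rootMultiplicity_eq_natTrailingDegree', ← count_roots, Multiset.count_eq_card_filter_eq,
      ← Multiset.card_add, add_comm, Multiset.filter_add_not]
  have := (card_le_card hsub).trans (card_insert_le _ _)
  have := Multiset.toFinset_card_le (g.roots.filter (¬0 = ·))
  have := card_roots' g
  omega

variable {p : ℕ} [hp : Fact p.Prime]

theorem stdAddChar_eval_add_prime_mul (f : ℤ[X]) (x b : ℤ) :
    ZMod.stdAddChar (N := p ^ 2) ((f.eval (x + p * b) : ℤ) : ZMod (p ^ 2)) =
      ZMod.stdAddChar (N := p ^ 2) ((f.eval x : ℤ) : ZMod (p ^ 2)) *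
        ZMod.stdAddChar (N := p) ((b * (derivative f).eval x : ℤ) : ZMod p) := by
  rw [← stdAddChar_prime_mul (p := p), ← AddChar.map_add_eq_mul, ← Int.cast_add]
  congr 1
  obtain ⟨c, hc⟩ := f.binomExpansion x (p * b)
  rw [ZMod.intCast_eq_intCast_iff_dvd_sub, hc]
  push_cast
  exact ⟨-(c * b ^ 2), by ring⟩

theorem sum_range_sq_stdAddChar_eval (f : ℤ[X]) :
    ∑ h ∈ range (p ^ 2), ZMod.stdAddChar (N := p ^ 2) ((f.eval (h : ℤ) : ℤ) : ZMod (p ^ 2)) =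
      p * ∑ u : ZMod p with ((derivative f).map (Int.castRingHom (ZMod p))).eval u = 0,
        ZMod.stdAddChar (N := p ^ 2) ((f.eval (u.val : ℤ) : ℤ) : ZMod (p ^ 2)) := by
  rw [sum_range_sq_eq_sum_sum p, mul_sum, sum_filter]
  refine sum_congr rfl fun u _ ↦ ?_
  have hinner := AddChar.sum_mulShift (((derivative f).map (Int.castRingHom (ZMod p))).eval u)
    (ZMod.isPrimitive_stdAddChar p)
  have hcast (b : ZMod p) : (((b.val : ℤ) * (derivative f).eval (u.val : ℤ) : ℤ) : ZMod p) =
      b * ((derivative f).map (Int.castRingHom (ZMod p))).eval u := by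
    have := eval_intCast_map (Int.castRingHom (ZMod p)) (derivative f) (u.val : ℤ)
    simp only [Int.cast_natCast, ZMod.natCast_zmod_val, eq_intCast] at this
    simp [this]
  push_cast
  simp only [stdAddChar_eval_add_prime_mul, hcast, ← mul_sum, hinner, ZMod.card]
  split_ifs
  · rw [mul_comm]
  · simp

theorem norm_sum_range_sq_stdAddChar_eval_le {f : ℤ[X]}
    (hf : (derivative f).map (Int.castRingHom (ZMod p)) ≠ 0) :
    ‖∑ h ∈ range (p ^ 2), ZMod.stdAddChar (N := p ^ 2) ((f.eval (h : ℤ) : ℤ) : ZMod (p ^ 2))‖ ≤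
      p * (((derivative f).map (Int.castRingHom (ZMod p))).natDegree -
        ((derivative f).map (Int.castRingHom (ZMod p))).natTrailingDegree + 1 : ℕ) := by
  rw [sum_range_sq_stdAddChar_eval, norm_mul, Complex.norm_natCast]
  gcongr
  refine (norm_sum_le _ _).trans ?_
  simp only [AddChar.norm_apply, sum_const, nsmul_one]
  exact_mod_cast card_roots_le_natDegree_sub hf

end CompleteSums

section KorobovSums

open Polynomial

variable {d : ℕ}

theorem supp_nonempty {k : Fin d → ℤ} (hk : k ≠ 0) : (supp k).Nonempty := by
  obtain ⟨j, hj⟩ := Function.ne_iff.mp hk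
  exact ⟨j, by simpa [supp] using hj⟩

theorem sub_add_one_le_width {k : Fin d → ℤ} {i j : Fin d} (hi : i ∈ supp k) (hj : j ∈ supp k) :
    (i : ℕ) - j + 1 ≤ width k := by
  rw [width, dif_pos ⟨i, hi⟩]
  have hmax : (i : ℕ) ≤ (supp k).max' ⟨i, hi⟩ := le_max' _ _ hi
  have hmin : ((supp k).min' ⟨i, hi⟩ : ℕ) ≤ j := min'_le _ _ hj
  omega

theorem one_le_width (k : Fin d → ℤ) : 1 ≤ width k := by
  unfold width
  split_ifs <;> omega

theorem e2pi_sub_intCast (z : ℂ) (n : ℤ) : e2pi (z - n) = e2pi z := by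
  rw [e2pi, e2pi, mul_sub, mul_comm _ (n : ℂ)]
  exact Complex.exp_periodic.sub_int_mul_eq n

/-- The polynomial `k₁ X + k₂ X² + ⋯ + k_d X ^ d`, whose values modulo `p²` are the phases of the
frequency `k` along Korobov's `p`-set. -/
def korobovPoly (k : Fin d → ℤ) : ℤ[X] := ∑ j, C (k j) * X ^ ((j : ℕ) + 1)

theorem eval_korobovPoly (k : Fin d → ℤ) (x : ℤ) :
    (korobovPoly k).eval x = ∑ j, k j * x ^ ((j : ℕ) + 1) := by
  simp [korobovPoly, eval_finsetSum]

theorem e2pi_korobovPt {p : ℕ} [hp : NeZero p] (k : Fin d → ℤ) (h : ℕ) :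
    e2pi (∑ j, (k j : ℂ) * (korobovPt d p h j : ℂ)) =
      ZMod.stdAddChar (N := p ^ 2) (((korobovPoly k).eval (h : ℤ) : ℤ) : ZMod (p ^ 2)) := by
  have hfract : (∑ j, (k j : ℂ) * (korobovPt d p h j : ℂ)) =
      (((korobovPoly k).eval (h : ℤ) : ℤ) : ℂ) / (p : ℂ) ^ 2 -
        ((∑ j : Fin d, k j * ⌊(h : ℝ) ^ ((j : ℕ) + 1) / (p : ℝ) ^ 2⌋ : ℤ) : ℂ) := by
    rw [eval_korobovPoly]
    push_cast
    rw [sum_div, ← sum_sub_distrib]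
    refine sum_congr rfl fun j _ ↦ ?_
    rw [korobovPt, ← Int.self_sub_floor]
    push_cast
    ring
  rw [hfract, e2pi_sub_intCast, ZMod.stdAddChar_coe, e2pi]
  congr 1
  push_cast
  ring

theorem coeff_korobovPoly (k : Fin d → ℤ) (j : Fin d) :
    (korobovPoly k).coeff ((j : ℕ) + 1) = k j := by
  simp only [korobovPoly, finsetSum_coeff, coeff_C_mul_X_pow, add_left_inj, Fin.val_inj]
  simp

theorem exists_mem_supp_of_coeff_korobovPoly_ne_zero {k : Fin d → ℤ} {n : ℕ}
    (hn : (korobovPoly k).coeff (n + 1) ≠ 0) : ∃ j ∈ supp k, (j : ℕ) = n := by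
  rw [korobovPoly, finsetSum_coeff] at hn
  obtain ⟨j, -, hj⟩ := exists_ne_zero_of_sum_ne_zero hn
  rw [coeff_C_mul_X_pow] at hj
  obtain ⟨hjn, hkj⟩ := ite_ne_right_iff.mp hj
  exact ⟨j, by simpa [supp] using hkj, by omega⟩

theorem natDegree_sub_natTrailingDegree_add_one_le_width {R : Type*} [CommRing R] {k : Fin d → ℤ}
    (hg : (derivative (korobovPoly k)).map (Int.castRingHom R) ≠ 0) :
    ((derivative (korobovPoly k)).map (Int.castRingHom R)).natDegree -
      ((derivative (korobovPoly k)).map (Int.castRingHom R)).natTrailingDegree + 1 ≤ width k := by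
  have hmem {n : ℕ} (hn : ((derivative (korobovPoly k)).map (Int.castRingHom R)).coeff n ≠ 0) :
      ∃ j ∈ supp k, (j : ℕ) = n := by
    refine exists_mem_supp_of_coeff_korobovPoly_ne_zero fun h ↦ hn ?_
    rw [coeff_map, coeff_derivative, h, zero_mul, map_zero]
  obtain ⟨i, hi, hideg⟩ := hmem (leadingCoeff_ne_zero.mpr hg)
  obtain ⟨j, hj, hjdeg⟩ := hmem (trailingCoeff_nonzero_iff_nonzero.mpr hg)
  exact hideg ▸ hjdeg ▸ sub_add_one_le_width hi hj

theorem prime_dvd_of_map_derivative_korobovPoly_eq_zero {p : ℕ} [hp : Fact p.Prime]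
    {k : Fin d → ℤ} (hg : (derivative (korobovPoly k)).map (Int.castRingHom (ZMod p)) = 0)
    (hdp : d ≤ p) {j : Fin d} (hj : (j : ℕ) + 1 ≠ p) : (p : ℤ) ∣ k j := by
  have hcoeff := congrArg (coeff · (j : ℕ)) hg
  simp only [coeff_map, coeff_derivative, coeff_korobovPoly, coeff_zero, map_mul, eq_intCast,
    mul_eq_zero] at hcoeff
  refine (ZMod.intCast_zmod_eq_zero_iff_dvd _ _).mp (hcoeff.resolve_right fun h ↦ ?_)
  have hdvd : (((j : ℕ) + 1 : ℕ) : ZMod p) = 0 := by simpa using h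
  rw [ZMod.natCast_eq_zero_iff] at hdvd
  have := Nat.le_of_dvd (by omega) hdvd
  omega

variable {p : ℕ} [hp : Fact p.Prime]

variable (p) in
/-- The polynomial `Q` over `ZMod p` such that `Q (u⁻¹) = ∑_{j ≠ l} (k_j / p) u ^ j` for `u ≠ 0`
when `p` divides the `k_j` with `j ≠ l`; negative powers are used because the indices `j` of the
support are close to `p - 1`. -/
def korobovTail (k : Fin d → ℤ) (l : Fin d) : (ZMod p)[X] :=
  ∑ j ∈ univ.erase l, C ((k j / p : ℤ) : ZMod p) * X ^ (p - 2 - j)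

theorem natDegree_korobovTail_le {k : Fin d → ℤ} {l : Fin d} (hl : l ∈ supp k)
    (hlp : (l : ℕ) + 1 = p) : (korobovTail p k l).natDegree ≤ width k - 2 := by
  refine natDegree_sum_le_of_forall_le _ _ fun j _ ↦ ?_
  by_cases hkj : k j = 0
  · simp [hkj]
  · have hwidth := sub_add_one_le_width hl (by simpa [supp] using hkj : j ∈ supp k)
    exact (natDegree_C_mul_X_pow_le _ _).trans (by omega)

theorem stdAddChar_eval_korobovPoly (hdp : d ≤ p) {k : Fin d → ℤ} {l : Fin d}
    (hlp : (l : ℕ) + 1 = p) (hdvd : ∀ j ≠ l, (p : ℤ) ∣ k j) (u : (ZMod p)ˣ) :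
    ZMod.stdAddChar (N := p ^ 2)
        (((korobovPoly k).eval ((u : ZMod p).val : ℤ) : ℤ) : ZMod (p ^ 2)) =
      heilbronnPhase p (k l) u * ZMod.stdAddChar ((korobovTail p k l).eval (↑u⁻¹ : ZMod p)) := by
  set U : ℤ := ((u : ZMod p).val : ℤ)
  have hU : (U : ZMod p) = u := by simp [U]
  have hsplit : (korobovPoly k).eval U =
      k l * U ^ p + p * ∑ j ∈ univ.erase l, k j / p * U ^ ((j : ℕ) + 1) := by
    rw [eval_korobovPoly, ← add_sum_erase _ _ (mem_univ l), hlp, mul_sum]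
    congr 1
    refine sum_congr rfl fun j hj ↦ ?_
    rw [← mul_assoc, Int.mul_ediv_cancel' (hdvd j (ne_of_mem_erase hj))]
  have htail : (korobovTail p k l).eval (↑u⁻¹ : ZMod p) =
      ((∑ j ∈ univ.erase l, k j / p * U ^ ((j : ℕ) + 1) : ℤ) : ZMod p) := by
    rw [korobovTail, eval_finsetSum, Int.cast_sum]
    refine sum_congr rfl fun j hj ↦ ?_
    have hjl : (j : ℕ) + 1 < p := by
      have := Fin.val_ne_of_ne (ne_of_mem_erase hj)
      omega
    have hpow : u⁻¹ ^ (p - 2 - (j : ℕ)) = u ^ ((j : ℕ) + 1) := by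
      rw [inv_pow, inv_eq_iff_mul_eq_one, ← pow_add,
        show p - 2 - (j : ℕ) + (j + 1) = p - 1 by omega, ZMod.units_pow_card_sub_one_eq_one]
    simp only [eval_mul, eval_C, eval_pow, eval_X, Int.cast_mul, Int.cast_pow, hU,
      ← Units.val_pow_eq_pow_val, hpow]
  rw [hsplit, Int.cast_add, AddChar.map_add_eq_mul, stdAddChar_prime_mul, htail, heilbronnPhase,
    ← hU, teichmullerLift_intCast, Int.cast_mul, Int.cast_pow]

theorem sum_e2pi_korobovPt_eq (hdp : d ≤ p) {k : Fin d → ℤ}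
    (hk : (derivative (korobovPoly k)).map (Int.castRingHom (ZMod p)) = 0) {l : Fin d}
    (hlp : (l : ℕ) + 1 = p) :
    ∑ h ∈ range (p ^ 2), e2pi (∑ j, (k j : ℂ) * (korobovPt d p h j : ℂ)) =
      p * (∑ u, heilbronnPhase p (k l) u *
        ZMod.stdAddChar ((korobovTail p k l).eval (↑u⁻¹ : ZMod p)) + 1) := by
  have hdvd (j : Fin d) (hj : j ≠ l) : (p : ℤ) ∣ k j :=
    prime_dvd_of_map_derivative_korobovPoly_eq_zero hk hdp fun h ↦
      hj (Fin.ext (Nat.succ_injective (h.trans hlp.symm)))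
  have hzero : (korobovPoly k).eval 0 = 0 := by simp [eval_korobovPoly]
  simp only [e2pi_korobovPt, sum_range_sq_stdAddChar_eval, hk, eval_zero, filter_true]
  simp only [sum_eq_sum_units_add, stdAddChar_eval_korobovPoly hdp hlp hdvd, ZMod.val_zero,
    Nat.cast_zero, hzero, Int.cast_zero, AddChar.map_zero_eq_one]

theorem norm_sum_e2pi_korobovPt_le_of_not_dvd (hdp : d ≤ p) {k : Fin d → ℤ}
    (hk : (derivative (korobovPoly k)).map (Int.castRingHom (ZMod p)) = 0) {l : Fin d}
    (hlp : (l : ℕ) + 1 = p) (hl : ¬(p : ℤ) ∣ k l) {v : ℝ} (hv : 14 * width k ≤ v)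
    (hvp : v ≤ Real.log (2 * p)) :
    ‖∑ h ∈ range (p ^ 2), e2pi (∑ j, (k j : ℂ) * (korobovPt d p h j : ℂ))‖ ≤
      (p : ℝ) ^ 2 * (14 * width k / v) := by
  have hw : (1 : ℝ) ≤ width k := mod_cast one_le_width k
  have hmem : l ∈ supp k := by
    rw [supp, mem_filter]
    exact ⟨mem_univ _, fun h ↦ hl (h ▸ dvd_zero _)⟩
  have hexp : Real.exp (14 * (v / (14 * width k)) * width k) ≤ 2 * p := by
    have hp0 : (0 : ℝ) < 2 * p := mod_cast Nat.mul_pos two_pos hp.out.pos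
    rwa [show 14 * (v / (14 * width k)) * width k = v by field_simp, ← Real.le_log_iff_exp_le hp0]
  have hheil := one_add_norm_sum_heilbronnPhase_mul_le ((one_le_div (by positivity)).mpr hv) hexp
    (one_le_width k) (mt (ZMod.intCast_zmod_eq_zero_iff_dvd _ _).mp hl)
    (natDegree_korobovTail_le hmem hlp)
  rw [sum_e2pi_korobovPt_eq hdp hk hlp, norm_mul, Complex.norm_natCast]
  calc _ ≤ (p : ℝ) * (p / (v / (14 * width k))) := by
        gcongr
        refine (norm_add_le _ _).trans ?_
        rwa [norm_one, add_comm]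
    _ = _ := by rw [div_div_eq_mul_div]; ring

theorem norm_e2pi_sum (k : Fin d → ℤ) (x : Fin d → ℝ) :
    ‖e2pi (∑ j, (k j : ℂ) * (x j : ℂ))‖ = 1 := by
  have : (2 * Real.pi * Complex.I * ∑ j, (k j : ℂ) * (x j : ℂ) : ℂ) =
      ((2 * Real.pi * ∑ j, (k j : ℝ) * x j : ℝ) : ℂ) * Complex.I := by
    push_cast
    ring
  rw [e2pi, this, Complex.norm_exp_ofReal_mul_I]

theorem norm_sum_e2pi_korobovPt_le_mul_width {k : Fin d → ℤ}
    (hk : (derivative (korobovPoly k)).map (Int.castRingHom (ZMod p)) ≠ 0) :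
    ‖∑ h ∈ range (p ^ 2), e2pi (∑ j, (k j : ℂ) * (korobovPt d p h j : ℂ))‖ ≤ p * width k := by
  simp only [e2pi_korobovPt]
  refine (norm_sum_range_sq_stdAddChar_eval_le hk).trans ?_
  gcongr
  exact natDegree_sub_natTrailingDegree_add_one_le_width hk

theorem norm_sum_e2pi_korobovPt_le (hdp : d ≤ p) (k : Fin d → ℤ) {v : ℝ} (hv : 0 < v)
    (hvp : v ≤ Real.log (2 * p)) :
    ‖∑ h ∈ range (p ^ 2), e2pi (∑ j, (k j : ℂ) * (korobovPt d p h j : ℂ))‖ ≤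
      p * width k + (if ∀ j, (p : ℤ) ∣ k j then (p : ℝ) ^ 2 else 0) +
        (if p = d then (p : ℝ) ^ 2 * min 1 (14 * width k / v) else 0) := by
  set S := ‖∑ h ∈ range (p ^ 2), e2pi (∑ j, (k j : ℂ) * (korobovPt d p h j : ℂ))‖
  have htrivial : S ≤ (p : ℝ) ^ 2 := by
    refine (norm_sum_le _ _).trans_eq ?_
    simp [norm_e2pi_sum]
  have hsecond : (0 : ℝ) ≤ if ∀ j, (p : ℤ) ∣ k j then (p : ℝ) ^ 2 else 0 := by
    split_ifs <;> positivity
  have hthird : 0 ≤ if p = d then (p : ℝ) ^ 2 * min 1 (14 * width k / v) else 0 := by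
    split_ifs <;> positivity
  have hfirst : (0 : ℝ) ≤ p * width k := by positivity
  by_cases hk : (derivative (korobovPoly k)).map (Int.castRingHom (ZMod p)) = 0
  swap
  · linarith [norm_sum_e2pi_korobovPt_le_mul_width hk]
  by_cases hall : ∀ j, (p : ℤ) ∣ k j
  · rw [if_pos hall]
    linarith
  push Not at hall
  obtain ⟨l, hl⟩ := hall
  have hlp : (l : ℕ) + 1 = p :=
    not_not.mp fun h ↦ hl (prime_dvd_of_map_derivative_korobovPoly_eq_zero hk hdp h)
  have hpd : p = d := by omega
  rw [if_neg (fun h ↦ hl (h l)), if_pos hpd]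
  suffices S ≤ (p : ℝ) ^ 2 * min 1 (14 * width k / v) by linarith
  obtain hsmall | hlarge := le_total (14 * (width k : ℝ)) v
  · rw [min_eq_right ((div_le_one hv).mpr hsmall)]
    exact norm_sum_e2pi_korobovPt_le_of_not_dvd hdp hk hlp hl hsmall hvp
  · rwa [min_eq_left ((one_le_div hv).mpr hlarge), mul_one]

end KorobovSums

section FrequencyBound

variable {d m p : ℕ}

theorem prime_of_mem_Pset (hp : p ∈ Pset m) : p.Prime := (mem_filter.1 hp).2.1

theorem le_of_mem_Pset (hp : p ∈ Pset m) : p ≤ m :=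
  Nat.lt_succ_iff.1 (mem_range.1 (mem_filter.1 hp).1)

theorem lt_two_mul_of_mem_Pset (hp : p ∈ Pset m) : m < 2 * p := by
  have := (mem_filter.1 hp).2.2
  omega

theorem log_le_log_two_mul_of_mem_Pset (hp : p ∈ Pset m) : Real.log m ≤ Real.log (2 * p) := by
  have hm : 0 < m := (prime_of_mem_Pset hp).pos.trans_le (le_of_mem_Pset hp)
  exact Real.log_le_log (by exact_mod_cast hm) (by exact_mod_cast (lt_two_mul_of_mem_Pset hp).le)

theorem log_le_two_mul_log_of_mem_Pset (hp : p ∈ Pset m) : Real.log m ≤ 2 * Real.log p := by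
  have hp2 : (2 : ℝ) ≤ p := by exact_mod_cast (prime_of_mem_Pset hp).two_le
  calc Real.log m ≤ Real.log (2 * p) := log_le_log_two_mul_of_mem_Pset hp
    _ = Real.log 2 + Real.log p := Real.log_mul (by norm_num) (by positivity)
    _ ≤ Real.log p + Real.log p := by gcongr
    _ = 2 * Real.log p := (two_mul _).symm

theorem sum_Pset_mul_le (m : ℕ) :
    (∑ p ∈ Pset m, (p : ℝ)) * m ≤ 2 * ∑ p ∈ Pset m, (p : ℝ) ^ 2 := by
  rw [sum_mul, mul_sum]
  refine sum_le_sum fun p hp ↦ ?_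
  have hmp : (m : ℝ) ≤ 2 * p := by exact_mod_cast (lt_two_mul_of_mem_Pset hp).le
  nlinarith [p.cast_nonneg (α := ℝ)]

theorem card_Pset_mul_sq_le (m : ℕ) :
    (#(Pset m) : ℝ) * (m : ℝ) ^ 2 ≤ 4 * ∑ p ∈ Pset m, (p : ℝ) ^ 2 := by
  rw [mul_sum, ← nsmul_eq_mul]
  refine card_nsmul_le_sum _ _ _ fun p hp ↦ ?_
  have hmp : (m : ℝ) ≤ 2 * p := by exact_mod_cast (lt_two_mul_of_mem_Pset hp).le
  nlinarith [m.cast_nonneg (α := ℝ)]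

theorem card_Pset_mul_sq_le_of_le (hdp : ∀ p ∈ Pset m, d ≤ p) :
    (#(Pset m) : ℝ) * (d : ℝ) ^ 2 ≤ ∑ p ∈ Pset m, (p : ℝ) ^ 2 := by
  rw [← nsmul_eq_mul]
  refine card_nsmul_le_sum _ _ _ fun p hp ↦ ?_
  have := hdp p hp
  gcongr

theorem sum_log_le_logmin {k : Fin d → ℤ} (hk : k ≠ 0) {D : Finset ℕ}
    (hprime : ∀ q ∈ D, q.Prime) (hdvd : ∀ q ∈ D, ∀ j, (q : ℤ) ∣ k j) :
    ∑ q ∈ D, Real.log q ≤ logmin k := by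
  rw [logmin, dif_pos (supp_nonempty hk)]
  refine le_inf' _ _ fun j hj ↦ ?_
  have hprod : ∏ q ∈ D, q ≤ (k j).natAbs :=
    Nat.le_of_dvd (Int.natAbs_pos.2 (mem_filter.1 hj).2) <|
      prod_primes_dvd _ (fun q hq ↦ (hprime q hq).prime)
        fun q hq ↦ Int.natCast_dvd.1 (hdvd q hq j)
  have hpos : 0 < ∏ q ∈ D, q := prod_pos fun q hq ↦ (hprime q hq).pos
  rw [← Real.log_prod fun q hq ↦ Nat.cast_ne_zero.2 (hprime q hq).ne_zero, ← Nat.cast_prod,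
    ← Int.cast_abs, ← Nat.cast_natAbs (α := ℝ)]
  exact Real.log_le_log (by exact_mod_cast hpos) (by exact_mod_cast hprod)

/-- The primes of `ℙ_m` dividing every component of the frequency `k`, for which the exponential
sum over `S_{d,p}` is trivial. -/
def commonPrimes (m : ℕ) (k : Fin d → ℤ) : Finset ℕ := {q ∈ Pset m | ∀ j, (q : ℤ) ∣ k j}

theorem card_commonPrimes_mul_log_le {k : Fin d → ℤ} (hk : k ≠ 0) :
    #(commonPrimes m k) * Real.log m ≤ 2 * logmin k := by
  calc _ ≤ ∑ q ∈ commonPrimes m k, 2 * Real.log q := by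
        rw [← nsmul_eq_mul]
        exact card_nsmul_le_sum _ _ _ fun q hq ↦
          log_le_two_mul_log_of_mem_Pset (mem_filter.1 hq).1
    _ ≤ 2 * logmin k := by
        rw [← mul_sum]
        gcongr
        exact sum_log_le_logmin hk (fun q hq ↦ prime_of_mem_Pset (mem_filter.1 hq).1)
          fun q hq ↦ (mem_filter.1 hq).2

theorem norm_sum_Pset_le (hm : 2 ≤ m) (hdp : ∀ p ∈ Pset m, d ≤ p) (k : Fin d → ℤ) :
    ‖∑ p ∈ Pset m, ∑ h ∈ range (p ^ 2), e2pi (∑ j, (k j : ℂ) * (korobovPt d p h j : ℂ))‖ ≤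
      width k * ∑ p ∈ Pset m, (p : ℝ) + #(commonPrimes m k) * (m : ℝ) ^ 2 +
        (d : ℝ) ^ 2 * min 1 (14 * width k / Real.log m) := by
  have hlog : 0 < Real.log m := Real.log_pos (by exact_mod_cast hm)
  set μ := min 1 (14 * width k / Real.log m)
  have hμ : 0 ≤ (d : ℝ) ^ 2 * μ := by positivity
  have hterm : ∀ p ∈ Pset m,
      ‖∑ h ∈ range (p ^ 2), e2pi (∑ j, (k j : ℂ) * (korobovPt d p h j : ℂ))‖ ≤
        width k * p + (if ∀ j, (p : ℤ) ∣ k j then (m : ℝ) ^ 2 else 0) +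
          (if p = d then (d : ℝ) ^ 2 * μ else 0) := by
    intro p hp
    have := Fact.mk (prime_of_mem_Pset hp)
    refine (norm_sum_e2pi_korobovPt_le (hdp p hp) k hlog
      (log_le_log_two_mul_of_mem_Pset hp)).trans ?_
    refine add_le_add (add_le_add (mul_comm _ _).le ?_) ?_
    · have hpm : (p : ℝ) ^ 2 ≤ (m : ℝ) ^ 2 := by gcongr; exact le_of_mem_Pset hp
      split_ifs
      · exact hpm
      · exact le_rfl
    · split_ifs with hpd
      · rw [hpd]
      · exact le_rfl
  calc _ ≤ _ := (norm_sum_le _ _).trans (sum_le_sum hterm)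
    _ = width k * ∑ p ∈ Pset m, (p : ℝ) + #(commonPrimes m k) * (m : ℝ) ^ 2 +
        (if d ∈ Pset m then (d : ℝ) ^ 2 * μ else 0) := by
      rw [sum_add_distrib, sum_add_distrib, ← mul_sum, sum_ite_eq', ← sum_filter, sum_const,
        nsmul_eq_mul, commonPrimes]
    _ ≤ _ := by
      gcongr
      split_ifs
      · exact le_rfl
      · exact hμ

-- If no `p` divides all `k j`, then `d` alone costs `14 w`; otherwise it is absorbed by `t v`.
theorem two_mul_add_le_sixteen_mul {w v L W : ℝ} {t : ℕ} (hv : 0 ≤ v) (hL : t * v ≤ 2 * L)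
    {x : ℝ} (hxv : x ≤ v) (hxw : x ≤ 14 * w) (hwW : w ≤ W) (hLW : L ≤ W) :
    2 * w + 4 * (t * v) + x ≤ 16 * W := by
  rcases t.eq_zero_or_pos with rfl | ht
  · push_cast
    linarith
  · have htv : v ≤ t * v := le_mul_of_one_le_left hv (by exact_mod_cast ht)
    linarith

theorem norm_sum_Pset_e2pi_le (hm : 2 ≤ m) {c : ℝ} (hc0 : 0 < c) (hc1 : c ≤ 1)
    (hcard : c * m / Real.log m ≤ #(Pset m)) (hdp : ∀ p ∈ Pset m, d ≤ p)
    {k : Fin d → ℤ} (hk : k ≠ 0) :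
    ‖∑ p ∈ Pset m, ∑ h ∈ range (p ^ 2), e2pi (∑ j, (k j : ℂ) * (korobovPt d p h j : ℂ))‖ ≤
      16 / (c * m) * weight2 k * ∑ p ∈ Pset m, (p : ℝ) ^ 2 := by
  have hv : 0 < Real.log m := Real.log_pos (by exact_mod_cast hm)
  have hbound := norm_sum_Pset_le hm hdp k
  set v := Real.log m
  set N := ∑ p ∈ Pset m, (p : ℝ) ^ 2
  set t := #(commonPrimes m k)
  set μ := min 1 (14 * width k / v)
  have hcm : c * m ≤ #(Pset m) * v := (div_le_iff₀ hv).1 hcard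
  have hfirst : width k * (∑ p ∈ Pset m, (p : ℝ)) * (c * m) ≤ 2 * width k * N := by
    calc _ ≤ width k * (∑ p ∈ Pset m, (p : ℝ)) * (1 * m) := by gcongr
      _ = width k * ((∑ p ∈ Pset m, (p : ℝ)) * m) := by ring
      _ ≤ width k * (2 * N) := by gcongr ?_ * ?_; exact sum_Pset_mul_le m
      _ = 2 * width k * N := by ring
  have hsecond : t * (m : ℝ) ^ 2 * (c * m) ≤ 4 * (t * v) * N := by
    calc _ ≤ t * (m : ℝ) ^ 2 * (#(Pset m) * v) := by gcongr
      _ = t * v * (#(Pset m) * (m : ℝ) ^ 2) := by ring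
      _ ≤ t * v * (4 * N) := by gcongr ?_ * ?_; exact card_Pset_mul_sq_le m
      _ = 4 * (t * v) * N := by ring
  have hthird : (d : ℝ) ^ 2 * μ * (c * m) ≤ v * μ * N := by
    calc _ ≤ (d : ℝ) ^ 2 * μ * (#(Pset m) * v) := by gcongr
      _ = v * μ * (#(Pset m) * (d : ℝ) ^ 2) := by ring
      _ ≤ v * μ * N := by gcongr; exact card_Pset_mul_sq_le_of_le hdp
  have htotal : 2 * width k + 4 * (t * v) + v * μ ≤ 16 * weight2 k :=
    two_mul_add_le_sixteen_mul hv.le (card_commonPrimes_mul_log_le hk)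
      (mul_le_of_le_one_right hv.le (min_le_left _ _))
      ((le_div_iff₀' hv).1 (min_le_right _ _)) (le_max_left _ _) (le_max_right _ _)
  have hN : 0 ≤ N := by positivity
  rw [div_mul_eq_mul_div, div_mul_eq_mul_div, le_div_iff₀ (by positivity)]
  linarith [mul_le_mul_of_nonneg_right htotal hN,
    mul_le_mul_of_nonneg_right hbound (by positivity : 0 ≤ c * m)]

end FrequencyBound

section Quadrature

open MeasureTheory

variable {d : ℕ}

theorem integral_Ico_e2pi {a : ℤ} (ha : a ≠ 0) :
    ∫ x in Set.Ico (0 : ℝ) 1, e2pi (a * x) = 0 := by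
  have hc : (2 * Real.pi * Complex.I * a : ℂ) ≠ 0 := by simp [Real.pi_ne_zero, ha]
  have hperiod : Complex.exp (2 * Real.pi * Complex.I * a * (1 : ℝ)) = 1 :=
    Complex.exp_eq_one_iff.2 ⟨a, by push_cast; ring⟩
  simp_rw [e2pi, ← mul_assoc]
  rw [integral_Ico_eq_integral_Ioc, ← intervalIntegral.integral_of_le zero_le_one,
    integral_exp_mul_complex hc, hperiod]
  simp

theorem integral_cube_e2pi (k : Fin d → ℤ) :
    ∫ x in Set.univ.pi fun _ : Fin d ↦ Set.Ico (0 : ℝ) 1, e2pi (∑ j, (k j : ℂ) * (x j : ℂ)) =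
      if k = 0 then 1 else 0 := by
  have hprod (x : Fin d → ℝ) :
      e2pi (∑ j, (k j : ℂ) * (x j : ℂ)) = ∏ j, e2pi ((k j : ℂ) * (x j : ℂ)) := by
    simp only [e2pi, mul_sum, Complex.exp_sum]
  simp_rw [hprod]
  rw [volume_pi, Measure.restrict_pi_pi,
    integral_fintype_prod_eq_prod fun j (x : ℝ) ↦ e2pi ((k j : ℂ) * (x : ℂ))]
  split_ifs with hk
  · simp [hk, e2pi]
  · obtain ⟨j, hj⟩ := Function.ne_iff.1 hk
    exact prod_eq_zero (mem_univ j) (integral_Ico_e2pi hj)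

variable {f : (Fin d → ℝ) → ℂ} {fhat : (Fin d → ℤ) → ℂ}

theorem integral_cube_eq_fourierCoeff_zero (hsum : Summable fun k ↦ ‖fhat k‖)
    (hrep : ∀ x : Fin d → ℝ, f x = ∑' k, fhat k * e2pi (∑ j, (k j : ℂ) * (x j : ℂ))) :
    ∫ x in Set.univ.pi fun _ : Fin d ↦ Set.Ico (0 : ℝ) 1, f x = fhat 0 := by
  have hvol : volume (Set.univ.pi fun _ : Fin d ↦ Set.Ico (0 : ℝ) 1) = 1 := by
    rw [volume_pi_pi]
    simp
  have : IsProbabilityMeasure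
      (volume.restrict (Set.univ.pi fun _ : Fin d ↦ Set.Ico (0 : ℝ) 1)) :=
    ⟨by rw [Measure.restrict_apply_univ, hvol]⟩
  have hnorm (k : Fin d → ℤ) (x : Fin d → ℝ) :
      ‖fhat k * e2pi (∑ j, (k j : ℂ) * (x j : ℂ))‖ = ‖fhat k‖ := by
    rw [norm_mul, norm_e2pi_sum, mul_one]
  simp_rw [hrep]
  rw [← integral_tsum_of_summable_integral_norm]
  · simp_rw [integral_const_mul, integral_cube_e2pi, mul_ite, mul_one, mul_zero]
    exact tsum_ite_eq 0 _
  · refine fun k ↦ (integrable_const ‖fhat k‖).mono' ?_ (.of_forall fun x ↦ (hnorm k x).le)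
    refine Continuous.aestronglyMeasurable ?_
    unfold e2pi
    fun_prop
  · simpa only [hnorm, integral_const, probReal_univ, one_smul] using hsum

theorem norm_integral_cube_sub_average_le {ι : Type*} {s : Finset ι} (hs : s.Nonempty)
    (x : ι → Fin d → ℝ) {W : (Fin d → ℤ) → ℝ} (hW : ∀ k, 1 ≤ W k)
    (habs : Summable fun k ↦ ‖fhat k‖ * W k)
    (hrep : ∀ x : Fin d → ℝ, f x = ∑' k, fhat k * e2pi (∑ j, (k j : ℂ) * (x j : ℂ)))
    {ε : ℝ} (hε : 0 ≤ ε)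
    (hbound : ∀ k ≠ 0, ‖∑ i ∈ s, e2pi (∑ j, (k j : ℂ) * (x i j : ℂ))‖ ≤ ε * W k * #s) :
    ‖(∫ x in Set.univ.pi fun _ : Fin d ↦ Set.Ico (0 : ℝ) 1, f x) - 1 / #s * ∑ i ∈ s, f (x i)‖ ≤
      ε * ∑' k, ‖fhat k‖ * W k := by
  have hsum : Summable fun k ↦ ‖fhat k‖ :=
    habs.of_nonneg_of_le (fun _ ↦ norm_nonneg _) fun k ↦
      le_mul_of_one_le_right (norm_nonneg _) (hW k)
  have hseries (y : Fin d → ℝ) :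
      HasSum (fun k ↦ fhat k * e2pi (∑ j, (k j : ℂ) * (y j : ℂ))) (f y) := by
    rw [hrep y]
    refine (Summable.of_norm ?_).hasSum
    simpa only [norm_mul, norm_e2pi_sum, mul_one] using hsum
  have haverage := (hasSum_sum fun i (_ : i ∈ s) ↦ hseries (x i)).mul_left (1 / (#s : ℂ))
  have herror := (hasSum_ite_eq (0 : Fin d → ℤ) (fhat 0)).sub haverage
  rw [integral_cube_eq_fourierCoeff_zero hsum hrep, ← herror.tsum_eq]
  refine tsum_of_norm_bounded (habs.hasSum.mul_left ε) fun k ↦ ?_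
  obtain rfl | hk := eq_or_ne k 0
  · have hcancel : (1 / #s : ℂ) * ∑ i ∈ s, fhat 0 * e2pi (∑ j, ((0 : Fin d → ℤ) j : ℂ) * x i j) =
        fhat 0 := by
      simp [e2pi, hs.card_ne_zero]
    rw [if_pos rfl, hcancel, sub_self, norm_zero]
    exact mul_nonneg hε (mul_nonneg (norm_nonneg _) (zero_le_one.trans (hW 0)))
  · have hcard : (0 : ℝ) < #s := by exact_mod_cast hs.card_pos
    rw [if_neg hk, zero_sub, norm_neg, ← mul_sum, mul_left_comm, norm_mul, norm_mul, norm_div,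
      norm_one, Complex.norm_natCast, one_div_mul_eq_div, mul_left_comm ε]
    gcongr
    exact (div_le_iff₀ hcard).2 (hbound k hk)

theorem one_le_weight2 (k : Fin d → ℤ) : 1 ≤ weight2 k :=
  le_max_of_le_left (by exact_mod_cast one_le_width k)

end Quadrature

open MeasureTheory in
theorem worst_case_error_Fd2_bound_general (d m : ℕ) (hm : 2 ≤ m)
    (cP : ℝ) (hc0 : 0 < cP) (hc1 : cP ≤ 1)
    (hcard : cP * m / Real.log m ≤ ((Pset m).card : ℝ))
    (hdp : ∀ p ∈ Pset m, d ≤ p)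
    (f : (Fin d → ℝ) → ℂ) (fhat : (Fin d → ℤ) → ℂ)
    (habs : Summable fun k : Fin d → ℤ ↦ ‖fhat k‖ * weight2 k)
    (hrep : ∀ x : Fin d → ℝ,
      f x = ∑' k : Fin d → ℤ, fhat k * e2pi (∑ j, (k j : ℂ) * (x j : ℂ))) :
    ‖(∫ x in Set.univ.pi fun _ : Fin d ↦ Set.Ico (0 : ℝ) 1, f x) -
        (1 / ((∑ p ∈ Pset m, p ^ 2 : ℕ) : ℂ)) * ∑ p ∈ Pset m, ∑ h ∈ Finset.range (p ^ 2),
          f (korobovPt d p h)‖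
      ≤ 16 / (cP * m) * ∑' k : Fin d → ℤ, ‖fhat k‖ * weight2 k := by
  have hlog : 0 < Real.log m := Real.log_pos (by exact_mod_cast hm)
  have hPset : 0 < (#(Pset m) : ℝ) := (by positivity : 0 < cP * m / Real.log m).trans_le hcard
  let s := (Pset m).sigma fun p ↦ range (p ^ 2)
  have hs : #s = ∑ p ∈ Pset m, p ^ 2 := by simp only [s, card_sigma, card_range]
  have hsne : s.Nonempty := by
    obtain ⟨p, hp⟩ := card_pos.1 (Nat.cast_pos.1 hPset)
    have hp0 := (prime_of_mem_Pset hp).pos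
    exact ⟨⟨p, 0⟩, mem_sigma.2 ⟨hp, mem_range.2 (by positivity)⟩⟩
  have hfreq (k : Fin d → ℤ) (hk : k ≠ 0) :
      ‖∑ i ∈ s, e2pi (∑ j, (k j : ℂ) * (korobovPt d i.1 i.2 j : ℂ))‖ ≤
        16 / (cP * m) * weight2 k * #s := by
    simpa only [hs, s, sum_sigma, Nat.cast_sum, Nat.cast_pow] using
      norm_sum_Pset_e2pi_le hm hc0 hc1 hcard hdp hk
  simpa only [hs, s, sum_sigma] using norm_integral_cube_sub_average_le hsne
    (fun i ↦ korobovPt d i.1 i.2) one_le_weight2 habs hrep (by positivity) hfreq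

open MeasureTheory in
theorem worst_case_error_Fd2_bound (d m : ℕ) (hm : 2 ≤ m)
    (cP : ℝ) (hc0 : 0 < cP) (hc1 : cP < 1)
    (hcard : cP * m / Real.log m ≤ ((Pset m).card : ℝ))
    (hd : 1 ≤ d) (hdp : ∀ p ∈ Pset m, d ≤ p)
    (f : (Fin d → ℝ) → ℝ) (hf : Continuous f)
    (fhat : (Fin d → ℤ) → ℂ)
    (habs : Summable fun k : Fin d → ℤ => ‖fhat k‖ * weight2 k)
    (hrep : ∀ x : Fin d → ℝ,
      (f x : ℂ) = ∑' k : Fin d → ℤ, fhat k * e2pi (∑ j, (k j : ℂ) * (x j : ℂ)))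
    (hnorm : ∑' k : Fin d → ℤ, ‖fhat k‖ * weight2 k ≤ 1) :
    ‖(∫ x in Set.univ.pi fun _ : Fin d => Set.Ico (0 : ℝ) 1, (f x : ℂ)) -
        (1 / ((∑ p ∈ Pset m, p ^ 2 : ℕ) : ℂ)) * ∑ p ∈ Pset m, ∑ h ∈ Finset.range (p ^ 2),
          (f (korobovPt d p h) : ℂ)‖
      ≤ 16 / (cP * m) :=
  (worst_case_error_Fd2_bound_general d m hm cP hc0 hc1.le hcard hdp _ fhat habs hrep).trans
    (mul_le_of_le_one_right (by positivity) hnorm)
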